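/- Suppose the horizon satisfies N ≥ n and assumptions (A1), (A2), (A3), (A4), (A5) hold. Then for every γ₁ > 0 there exist V_max, J_eq^max > 0 and c_{V,1} ∈ (0,1) such that: for every x_t ∈ ℝⁿ at which the tracking MPC problem is feasible with V(x_t) ≤ V_max and J*_{eq,lin}(x_t) ≤ J_eq^max, if (x̄*, ū*, xˢ*, uˢ*, yˢ*) is an optimal solution at x_t satisfying Σ_{k=0}^{n−1}(‖x̄*_k − xˢ*‖₂² + ‖ū*_k − uˢ*‖₂²) ≥ γ₁‖xˢ* − xˢʳ_lin(x_t)‖₂², and x_{t+n} denotes the state obtained by applying ū*₀, …, ū*_{n−1} to the nonlinear dynamics x_{k+1} = f(x_k, u_k) starting from x_t, and moreover J*_{eq,lin}(x_{t+n}) ≤ J_eq^max, then the tracking MPC problem is feasible at x_{t+n} and V(x_{t+n}) ≤ c_{V,1} · V(x_t). -/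

import Mathlib

open Matrix

noncomputable section

def en {k : ℕ} (x : Fin k → ℝ) : ℝ := Real.sqrt (∑ i, x i ^ 2)

def qn {k : ℕ} (P : Matrix (Fin k) (Fin k) ℝ) (x : Fin k → ℝ) : ℝ :=
  x ⬝ᵥ P.mulVec x

def jac {n q : ℕ} (g : (Fin n → ℝ) → Fin q → ℝ) (xt : Fin n → ℝ) :
    Matrix (Fin q) (Fin n) ℝ :=
  LinearMap.toMatrix' (fderiv ℝ g xt).toLinearMap

def fdyn {n m : ℕ} (f0 : (Fin n → ℝ) → Fin n → ℝ) (B : Matrix (Fin n) (Fin m) ℝ)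
    (x : Fin n → ℝ) (u : Fin m → ℝ) : Fin n → ℝ :=
  f0 x + B.mulVec u

def hout {n p m : ℕ} (h0 : (Fin n → ℝ) → Fin p → ℝ) (D : Matrix (Fin p) (Fin m) ℝ)
    (x : Fin n → ℝ) (u : Fin m → ℝ) : Fin p → ℝ :=
  h0 x + D.mulVec u

def flin {n m : ℕ} (f0 : (Fin n → ℝ) → Fin n → ℝ) (B : Matrix (Fin n) (Fin m) ℝ)
    (xt x : Fin n → ℝ) (u : Fin m → ℝ) : Fin n → ℝ :=
  (jac f0 xt).mulVec x + B.mulVec u + (f0 xt - (jac f0 xt).mulVec xt)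

def hlin {n p m : ℕ} (h0 : (Fin n → ℝ) → Fin p → ℝ) (D : Matrix (Fin p) (Fin m) ℝ)
    (xt x : Fin n → ℝ) (u : Fin m → ℝ) : Fin p → ℝ :=
  (jac h0 xt).mulVec x + D.mulVec u + (h0 xt - (jac h0 xt).mulVec xt)

def Zlin {n m : ℕ} (f0 : (Fin n → ℝ) → Fin n → ℝ) (B : Matrix (Fin n) (Fin m) ℝ)
    (Us : Set (Fin m → ℝ)) (xt : Fin n → ℝ) : Set ((Fin n → ℝ) × (Fin m → ℝ)) :=
  {z | z.2 ∈ Us ∧ z.1 = flin f0 B xt z.1 z.2}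

def Zs {n m : ℕ} (f0 : (Fin n → ℝ) → Fin n → ℝ) (B : Matrix (Fin n) (Fin m) ℝ)
    (Us : Set (Fin m → ℝ)) : Set ((Fin n → ℝ) × (Fin m → ℝ)) :=
  {z | z.2 ∈ Us ∧ z.1 = fdyn f0 B z.1 z.2}

def A2holds {n m p : ℕ} (f0 : (Fin n → ℝ) → Fin n → ℝ) (h0 : (Fin n → ℝ) → Fin p → ℝ)
    (B : Matrix (Fin n) (Fin m) ℝ) (D : Matrix (Fin p) (Fin m) ℝ) (σs : ℝ) : Prop :=
  ∀ (xt v : Fin n → ℝ) (w : Fin m → ℝ),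
    σs * Real.sqrt (en v ^ 2 + en w ^ 2) ≤
      Real.sqrt (en ((jac f0 xt).mulVec v - v + B.mulVec w) ^ 2 +
        en ((jac h0 xt).mulVec v + D.mulVec w) ^ 2)

def A3holds {n m : ℕ} (f0 : (Fin n → ℝ) → Fin n → ℝ) (B : Matrix (Fin n) (Fin m) ℝ)
    (μ : ℝ) : Prop :=
  ∀ (xt w : Fin n → ℝ),
    μ * en w ≤ Real.sqrt (∑ k ∈ Finset.range n, en ((jac f0 xt ^ k * B)ᵀ.mulVec w) ^ 2)

def A4holds {n : ℕ} (f0 : (Fin n → ℝ) → Fin n → ℝ) (σl : ℝ) : Prop :=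
  ∀ xt v : Fin n → ℝ, σl * en v ≤ en (v - (jac f0 xt).mulVec v)
def Jeqlin {n m p : ℕ} (f0 : (Fin n → ℝ) → Fin n → ℝ) (h0 : (Fin n → ℝ) → Fin p → ℝ)
    (B : Matrix (Fin n) (Fin m) ℝ) (D : Matrix (Fin p) (Fin m) ℝ)
    (Us : Set (Fin m → ℝ)) (S : Matrix (Fin p) (Fin p) ℝ) (yr : Fin p → ℝ)
    (xt : Fin n → ℝ) : ℝ :=
  sInf {c : ℝ | ∃ z ∈ Zlin f0 B Us xt, c = qn S (hlin h0 D xt z.1 z.2 - yr)}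

def MPCfeas {n m p : ℕ} (f0 : (Fin n → ℝ) → Fin n → ℝ) (h0 : (Fin n → ℝ) → Fin p → ℝ)
    (B : Matrix (Fin n) (Fin m) ℝ) (D : Matrix (Fin p) (Fin m) ℝ)
    (U Us : Set (Fin m → ℝ)) (N : ℕ) (xt : Fin n → ℝ)
    (xb : ℕ → Fin n → ℝ) (ub : ℕ → Fin m → ℝ)
    (xs : Fin n → ℝ) (us : Fin m → ℝ) (ys : Fin p → ℝ) : Prop :=
  (∀ k < N, xb (k + 1) = flin f0 B xt (xb k) (ub k)) ∧
  xb 0 = xt ∧ xb N = xs ∧ (∀ k < N, ub k ∈ U) ∧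
  (xs, us) ∈ Zlin f0 B Us xt ∧ ys = hlin h0 D xt xs us

def MPCcost {n m p : ℕ} (Q : Matrix (Fin n) (Fin n) ℝ) (R : Matrix (Fin m) (Fin m) ℝ)
    (S : Matrix (Fin p) (Fin p) ℝ) (yr : Fin p → ℝ) (N : ℕ)
    (xb : ℕ → Fin n → ℝ) (ub : ℕ → Fin m → ℝ)
    (xs : Fin n → ℝ) (us : Fin m → ℝ) (ys : Fin p → ℝ) : ℝ :=
  (∑ k ∈ Finset.range N, (qn Q (xb k - xs) + qn R (ub k - us))) + qn S (ys - yr)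

def Jstar {n m p : ℕ} (f0 : (Fin n → ℝ) → Fin n → ℝ) (h0 : (Fin n → ℝ) → Fin p → ℝ)
    (B : Matrix (Fin n) (Fin m) ℝ) (D : Matrix (Fin p) (Fin m) ℝ)
    (U Us : Set (Fin m → ℝ)) (Q : Matrix (Fin n) (Fin n) ℝ) (R : Matrix (Fin m) (Fin m) ℝ)
    (S : Matrix (Fin p) (Fin p) ℝ) (yr : Fin p → ℝ) (N : ℕ) (xt : Fin n → ℝ) : ℝ :=
  sInf {c : ℝ | ∃ xb ub xs us ys, MPCfeas f0 h0 B D U Us N xt xb ub xs us ys ∧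
    c = MPCcost Q R S yr N xb ub xs us ys}

def Vfun {n m p : ℕ} (f0 : (Fin n → ℝ) → Fin n → ℝ) (h0 : (Fin n → ℝ) → Fin p → ℝ)
    (B : Matrix (Fin n) (Fin m) ℝ) (D : Matrix (Fin p) (Fin m) ℝ)
    (U Us : Set (Fin m → ℝ)) (Q : Matrix (Fin n) (Fin n) ℝ) (R : Matrix (Fin m) (Fin m) ℝ)
    (S : Matrix (Fin p) (Fin p) ℝ) (yr : Fin p → ℝ) (N : ℕ) (xt : Fin n → ℝ) : ℝ :=
  Jstar f0 h0 B D U Us Q R S yr N xt - Jeqlin f0 h0 B D Us S yr xt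

def MPCfeasible {n m p : ℕ} (f0 : (Fin n → ℝ) → Fin n → ℝ) (h0 : (Fin n → ℝ) → Fin p → ℝ)
    (B : Matrix (Fin n) (Fin m) ℝ) (D : Matrix (Fin p) (Fin m) ℝ)
    (U Us : Set (Fin m → ℝ)) (N : ℕ) (xt : Fin n → ℝ) : Prop :=
  ∃ xb ub xs us ys, MPCfeas f0 h0 B D U Us N xt xb ub xs us ys

def MPCopt {n m p : ℕ} (f0 : (Fin n → ℝ) → Fin n → ℝ) (h0 : (Fin n → ℝ) → Fin p → ℝ)
    (B : Matrix (Fin n) (Fin m) ℝ) (D : Matrix (Fin p) (Fin m) ℝ)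
    (U Us : Set (Fin m → ℝ)) (Q : Matrix (Fin n) (Fin n) ℝ) (R : Matrix (Fin m) (Fin m) ℝ)
    (S : Matrix (Fin p) (Fin p) ℝ) (yr : Fin p → ℝ) (N : ℕ) (xt : Fin n → ℝ)
    (xb : ℕ → Fin n → ℝ) (ub : ℕ → Fin m → ℝ)
    (xs : Fin n → ℝ) (us : Fin m → ℝ) (ys : Fin p → ℝ) : Prop :=
  MPCfeas f0 h0 B D U Us N xt xb ub xs us ys ∧
  ∀ xb' ub' xs' us' ys', MPCfeas f0 h0 B D U Us N xt xb' ub' xs' us' ys' →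
    MPCcost Q R S yr N xb ub xs us ys ≤ MPCcost Q R S yr N xb' ub' xs' us' ys'

def rollout {n m : ℕ} (f0 : (Fin n → ℝ) → Fin n → ℝ) (B : Matrix (Fin n) (Fin m) ℝ)
    (x0 : Fin n → ℝ) (u : ℕ → Fin m → ℝ) : ℕ → Fin n → ℝ
  | 0 => x0
  | k + 1 => fdyn f0 B (rollout f0 B x0 u k) (u k)

/-!
Constants that are uniform over all solutions with `V` and `J*_eq,lin` small are obtained by
letting both tend to `0` along a filter on the set of solutions, so that every estimate is a big-O
statement. Put `s = √V` and `t = √V + √J*_eq,lin`. The predicted states and inputs lie within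
`O(s)` of the artificial steady state, hence moving the linearization point from `x_t` to `x_{t+n}`
perturbs the prediction model, and the prediction of `x_{t+n}` itself, by `O(s²)` only. Dropping the
first `n` steps of the optimal solution, appending its steady state and repairing the `O(s²)`
mismatch through the reachability Gramian yields a feasible candidate at `x_{t+n}`, and comparing
the steady optima at both linearization points gives `V(x_{t+n}) ≤ V - H + O(t V)`, where `H` is the
cost of the dropped steps. The domination hypothesis puts `x_t` within `O(√H)` of the optimal steady
state, so that steering there costs `V = O(H)`, and the decrease `H` absorbs the error `O(t V)`.
-/

section

open Filter Asymptotics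
open scoped Topology

variable {ι : Type*} {l : Filter ι} {a b k m n p : ℕ}

theorem en_eq_norm_toLp (x : Fin k → ℝ) : en x = ‖WithLp.toLp 2 x‖ := by
  simp [en, EuclideanSpace.norm_eq]

theorem en_nonneg (x : Fin k → ℝ) : 0 ≤ en x := Real.sqrt_nonneg _

theorem en_sq_eq_dotProduct (x : Fin k → ℝ) : en x ^ 2 = x ⬝ᵥ x := by
  rw [en, Real.sq_sqrt (Finset.sum_nonneg fun _ _ => sq_nonneg _)]
  simp only [dotProduct, sq]

theorem dotProduct_le_en_mul_en (x y : Fin k → ℝ) : x ⬝ᵥ y ≤ en x * en y := by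
  simpa [en_eq_norm_toLp, EuclideanSpace.inner_toLp_toLp, dotProduct_comm] using
    real_inner_le_norm (WithLp.toLp 2 x) (WithLp.toLp 2 y)

theorem isTheta_en (f : ι → Fin k → ℝ) : (fun i => en (f i)) =Θ[l] f := by
  simp only [en_eq_norm_toLp]
  exact isTheta_norm_left.2 ⟨(EuclideanSpace.equiv (Fin k) ℝ).symm.isBigO_comp f l,
    (EuclideanSpace.equiv (Fin k) ℝ).symm.isBigO_comp_rev f l⟩

theorem isBigO_mulVec (M : Matrix (Fin a) (Fin b) ℝ) (f : ι → Fin b → ℝ) :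
    (fun i => M *ᵥ f i) =O[l] f :=
  (Matrix.mulVecLin M).toContinuousLinearMap.isBigO_comp f l

theorem isTheta_mulVec {M : Matrix (Fin k) (Fin k) ℝ} (hM : IsUnit M) (f : ι → Fin k → ℝ) :
    (fun i => M *ᵥ f i) =Θ[l] f := by
  refine ⟨isBigO_mulVec M f, ?_⟩
  simpa [Matrix.nonsing_inv_mul _ ((Matrix.isUnit_iff_isUnit_det M).1 hM)] using
    isBigO_mulVec (l := l) M⁻¹ fun i => M *ᵥ f i

theorem isBigO_dotProduct (f g : ι → Fin k → ℝ) :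
    (fun i => f i ⬝ᵥ g i) =O[l] fun i => ‖f i‖ * ‖g i‖ :=
  IsBigO.fun_sum fun j _ => (IsBigO.of_norm_le fun i => norm_le_pi_norm (f i) j).mul
    (IsBigO.of_norm_le fun i => norm_le_pi_norm (g i) j)

theorem exists_qn_eq_en_mulVec_sq {P : Matrix (Fin k) (Fin k) ℝ} (hP : P.PosDef) :
    ∃ M : Matrix (Fin k) (Fin k) ℝ, IsUnit M ∧ ∀ x, qn P x = en (M *ᵥ x) ^ 2 := by
  open scoped MatrixOrder Matrix.Norms.L2Operator in
  obtain ⟨M, hM, rfl⟩ := CStarAlgebra.isStrictlyPositive_iff_eq_star_mul_self.1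
    (Matrix.isStrictlyPositive_iff_posDef.2 hP)
  refine ⟨M, hM, fun x => ?_⟩
  rw [en_sq_eq_dotProduct, qn, ← Matrix.mulVec_mulVec, star_eq_conjTranspose,
    Matrix.conjTranspose_eq_transpose_of_trivial, Matrix.dotProduct_mulVec, Matrix.vecMul_transpose]

theorem qn_nonneg {P : Matrix (Fin k) (Fin k) ℝ} (hP : P.PosDef) (x : Fin k → ℝ) :
    0 ≤ qn P x := by
  obtain ⟨M, -, hM⟩ := exists_qn_eq_en_mulVec_sq hP
  exact hM x ▸ sq_nonneg _

theorem isTheta_qn {P : Matrix (Fin k) (Fin k) ℝ} (hP : P.PosDef) (f : ι → Fin k → ℝ) :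
    (fun i => qn P (f i)) =Θ[l] fun i => ‖f i‖ ^ 2 := by
  obtain ⟨M, hM, hqn⟩ := exists_qn_eq_en_mulVec_sq hP
  simp only [hqn]
  exact (((isTheta_en _).trans (isTheta_mulVec hM f)).norm_right).pow 2

theorem isBigO_qn_add_sub_qn (P : Matrix (Fin k) (Fin k) ℝ) {f g : ι → Fin k → ℝ} {s t : ι → ℝ}
    (hf : f =O[l] t) (hg : g =O[l] s) (hst : s =O[l] t) :
    (fun i => qn P (f i + g i) - qn P (f i)) =O[l] fun i => t i * s i := by
  have bilinear {f g : ι → Fin k → ℝ} {s t : ι → ℝ} (hf : f =O[l] t) (hg : g =O[l] s) :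
      (fun i => f i ⬝ᵥ P *ᵥ g i) =O[l] fun i => t i * s i :=
    (isBigO_dotProduct _ _).trans (hf.norm_left.mul ((isBigO_mulVec P g).trans hg).norm_left)
  have expand (i : ι) : qn P (f i + g i) - qn P (f i) =
      f i ⬝ᵥ P *ᵥ g i + g i ⬝ᵥ P *ᵥ (f i + g i) := by
    simp only [qn, Matrix.mulVec_add, add_dotProduct, dotProduct_add]
    ring
  simp only [expand]
  exact (bilinear hf hg).add
    ((bilinear hg (hf.add (hg.trans hst))).congr_right fun i => mul_comm _ _)

theorem qn_sub_le_of_le_midpoint {P : Matrix (Fin k) (Fin k) ℝ} {x y : Fin k → ℝ}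
    (h : qn P y ≤ qn P (midpoint ℝ x y)) : qn P (x - y) ≤ 2 * (qn P x - qn P y) := by
  have parallelogram : 4 * qn P (midpoint ℝ x y) + qn P (x - y) = 2 * qn P x + 2 * qn P y := by
    simp only [midpoint_eq_smul_add, qn, Matrix.mulVec_add, Matrix.mulVec_sub, Matrix.mulVec_smul,
      add_dotProduct, dotProduct_add, sub_dotProduct, dotProduct_sub, smul_dotProduct,
      dotProduct_smul, smul_eq_mul, invOf_eq_inv]
    ring
  linarith

theorem isBigO_of_norm_sq_isBigO_mul_add {E : Type*} [SeminormedAddCommGroup E] {f : ι → E}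
    {s : ι → ℝ} (h : (fun i => ‖f i‖ ^ 2) =O[l] fun i => s i * (‖s i‖ + ‖f i‖)) : f =O[l] s := by
  obtain ⟨C, hC, hfs⟩ := h.exists_pos
  refine IsBigO.of_bound (C + 1) (hfs.bound.mono fun i hi => ?_)
  rw [norm_pow, norm_norm, norm_mul, Real.norm_of_nonneg (by positivity : 0 ≤ ‖s i‖ + ‖f i‖)] at hi
  by_contra! hlt
  have f_pos : 0 < ‖f i‖ := hlt.trans_le' (by positivity)
  nlinarith [mul_lt_mul_of_pos_right hlt f_pos, sq_nonneg ‖s i‖,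
    mul_nonneg (norm_nonneg (s i)) (sub_nonneg.2 hlt.le)]

theorem isBigO_of_nonneg_of_le {f g : ι → ℝ} (hf : ∀ i, 0 ≤ f i) (hfg : ∀ i, f i ≤ g i) :
    f =O[l] g :=
  isBigO_of_le l fun i => by
    rw [Real.norm_of_nonneg (hf i)]
    exact (hfg i).trans (le_abs_self _)

theorem isBigO_sqrt_of_le {f g : ι → ℝ} (hfg : ∀ i, f i ≤ g i) :
    (fun i => √(f i)) =O[l] fun i => √(g i) :=
  isBigO_of_nonneg_of_le (fun _ => Real.sqrt_nonneg _) fun i => Real.sqrt_le_sqrt (hfg i)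

theorem isBigO_sq_iff_isBigO {E : Type*} [SeminormedAddCommGroup E] {f : ι → E} {s : ι → ℝ} :
    ((fun i => ‖f i‖ ^ 2) =O[l] fun i => s i ^ 2) ↔ f =O[l] s :=
  ⟨fun h => isBigO_norm_left.1 (IsBigO.of_pow two_ne_zero h), fun h => h.norm_left.pow 2⟩

theorem isBigO_qn_sq_iff {P : Matrix (Fin k) (Fin k) ℝ} (hP : P.PosDef) {f : ι → Fin k → ℝ}
    {s : ι → ℝ} : ((fun i => qn P (f i)) =O[l] fun i => s i ^ 2) ↔ f =O[l] s :=
  (isTheta_qn hP f).isBigO_congr_left.trans isBigO_sq_iff_isBigO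

theorem isBigO_one_comp_of_continuous {E F : Type*} [NormedAddCommGroup E] [ProperSpace E]
    [NormedAddCommGroup F] {g : E → F} (hg : Continuous g) {x : ι → E}
    (hx : x =O[l] fun _ => (1 : ℝ)) : (fun i => g (x i)) =O[l] fun _ => (1 : ℝ) := by
  obtain ⟨r, hr⟩ := hx.bound
  obtain ⟨C, hC⟩ := (isCompact_closedBall (0 : E) r).exists_bound_of_continuousOn hg.continuousOn
  refine IsBigO.of_bound C (hr.mono fun i hi => ?_)
  simpa using hC (x i) (by simpa using hi)

section Taylor

variable {E F : Type*} [NormedAddCommGroup E] [NormedSpace ℝ E]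
  [NormedAddCommGroup F] [NormedSpace ℝ F] {g : E → F} {x x' : ι → E}

theorem norm_taylor_sub_le_of_lipschitzOnWith {K : NNReal} {x y : E} (hg : Differentiable ℝ g)
    (hK : LipschitzOnWith K (fderiv ℝ g) (segment ℝ x y)) :
    ‖g y - g x - fderiv ℝ g x (y - x)‖ ≤ K * ‖y - x‖ ^ 2 := by
  rw [sq, ← mul_assoc]
  refine (convex_segment x y).norm_image_sub_le_of_norm_hasFDerivWithin_le'
    (fun w _ => (hg w).hasFDerivAt.hasFDerivWithinAt) (fun w hw => ?_) (left_mem_segment ℝ x y)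
    (right_mem_segment ℝ x y)
  refine (hK.norm_sub_le hw (left_mem_segment ℝ x y)).trans ?_
  gcongr
  exact norm_sub_le_of_mem_segment hw

variable [ProperSpace E]

theorem exists_lipschitzOnWith_closedBall_of_contDiff (hg : ContDiff ℝ 1 g) (r : ℝ) :
    ∃ K, LipschitzOnWith K g (Metric.closedBall 0 r) :=
  hg.contDiffOn.exists_lipschitzOnWith one_ne_zero (convex_closedBall 0 r)
    (isCompact_closedBall 0 r)

theorem isBigO_comp_sub_comp_of_contDiff (hg : ContDiff ℝ 1 g) (hx : x =O[l] fun _ => (1 : ℝ))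
    (hx' : x' =O[l] fun _ => (1 : ℝ)) :
    (fun i => g (x' i) - g (x i)) =O[l] fun i => x' i - x i := by
  obtain ⟨r, hr⟩ := (hx.prod_left hx').bound
  obtain ⟨K, hK⟩ := exists_lipschitzOnWith_closedBall_of_contDiff hg r
  refine IsBigO.of_bound K (hr.mono fun i hi => ?_)
  rw [norm_one, mul_one] at hi
  exact hK.norm_sub_le (mem_closedBall_zero_iff.2 ((norm_snd_le _).trans hi))
    (mem_closedBall_zero_iff.2 ((norm_fst_le _).trans hi))

theorem isBigO_taylor_sub (hg : ContDiff ℝ 2 g) (hx : x =O[l] fun _ => (1 : ℝ))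
    (hx' : x' =O[l] fun _ => (1 : ℝ)) :
    (fun i => g (x' i) - g (x i) - fderiv ℝ g (x i) (x' i - x i)) =O[l]
      fun i => ‖x' i - x i‖ ^ 2 := by
  obtain ⟨r, hr⟩ := (hx.prod_left hx').bound
  obtain ⟨K, hK⟩ := exists_lipschitzOnWith_closedBall_of_contDiff
    (hg.fderiv_right (m := 1) (by norm_num)) r
  refine IsBigO.of_bound K (hr.mono fun i hi => ?_)
  rw [norm_one, mul_one] at hi
  rw [norm_pow, norm_norm]
  exact norm_taylor_sub_le_of_lipschitzOnWith (hg.differentiable two_ne_zero)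
    (hK.mono ((convex_closedBall 0 r).segment_subset
      (mem_closedBall_zero_iff.2 ((norm_fst_le _).trans hi))
      (mem_closedBall_zero_iff.2 ((norm_snd_le _).trans hi))))

end Taylor

theorem jac_mulVec (g : (Fin n → ℝ) → Fin p → ℝ) (x v : Fin n → ℝ) :
    jac g x *ᵥ v = fderiv ℝ g x v := by
  simp [jac, LinearMap.toMatrix'_mulVec]

theorem hlin_sub_hlin (g : (Fin n → ℝ) → Fin p → ℝ) (D : Matrix (Fin p) (Fin m) ℝ)
    (x z z' : Fin n → ℝ) (u u' : Fin m → ℝ) :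
    hlin g D x z u - hlin g D x z' u' = jac g x *ᵥ (z - z') + D *ᵥ (u - u') := by
  simp only [hlin, Matrix.mulVec_sub]
  abel

theorem hlin_self (g : (Fin n → ℝ) → Fin p → ℝ) (D : Matrix (Fin p) (Fin m) ℝ) (x : Fin n → ℝ)
    (u : Fin m → ℝ) : hlin g D x x u = hout g D x u := by
  simp only [hlin, hout]
  abel

section Linearization

variable {g : (Fin n → ℝ) → Fin p → ℝ} {x x' z : ι → Fin n → ℝ} {s t : ι → ℝ}

theorem isBigO_jac_mulVec (hg : ContDiff ℝ 1 g) (hx : x =O[l] fun _ => (1 : ℝ))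
    (v : ι → Fin n → ℝ) : (fun i => jac g (x i) *ᵥ v i) =O[l] v := by
  simp only [jac_mulVec]
  have fderiv_bounded := isBigO_one_comp_of_continuous (hg.continuous_fderiv one_ne_zero) hx
  refine (IsBigO.of_norm_le fun i => (fderiv ℝ g (x i)).le_opNorm (v i)).trans ?_
  simpa using fderiv_bounded.norm_left.mul (isBigO_refl v l).norm_norm

theorem isBigO_hlin_sub_hlin_of_point (hg : ContDiff ℝ 2 g) (D : Matrix (Fin p) (Fin m) ℝ)
    (u : ι → Fin m → ℝ) (hx : x =O[l] fun _ => (1 : ℝ)) (hx' : x' =O[l] fun _ => (1 : ℝ))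
    (hxx' : (fun i => x' i - x i) =O[l] s) (hz : (fun i => z i - x' i) =O[l] t)
    (hst : s =O[l] t) :
    (fun i => hlin g D (x' i) (z i) (u i) - hlin g D (x i) (z i) (u i)) =O[l]
      fun i => s i * t i := by
  have expand (i : ι) : hlin g D (x' i) (z i) (u i) - hlin g D (x i) (z i) (u i) =
      (g (x' i) - g (x i) - fderiv ℝ g (x i) (x' i - x i)) +
        (fderiv ℝ g (x' i) - fderiv ℝ g (x i)) (z i - x' i) := by
    simp only [hlin, jac_mulVec, map_sub, _root_.sub_apply]
    abel
  have remainder : (fun i => g (x' i) - g (x i) - fderiv ℝ g (x i) (x' i - x i)) =O[l]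
      fun i => s i * t i := by
    refine (isBigO_taylor_sub hg hx hx').trans ?_
    simpa only [sq] using hxx'.norm_left.mul (hxx'.trans hst).norm_left
  have fderiv_sub := (isBigO_comp_sub_comp_of_contDiff
    (hg.fderiv_right (m := 1) (by norm_num)) hx hx').trans hxx'
  simp only [expand]
  exact remainder.add ((IsBigO.of_norm_le fun i => ContinuousLinearMap.le_opNorm _ _).trans
    (fderiv_sub.norm_left.mul hz.norm_left))

end Linearization

/-- The steady state `xˢ = A_x̃ xˢ + B u + e_x̃` of the linearization at `x` under the constant
input `u`, in closed form; it is meaningful where `1 - jac f0 x` is invertible. -/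
def linSteadyState (f0 : (Fin n → ℝ) → Fin n → ℝ) (B : Matrix (Fin n) (Fin m) ℝ)
    (x : Fin n → ℝ) (u : Fin m → ℝ) : Fin n → ℝ :=
  (1 - jac f0 x)⁻¹ *ᵥ flin f0 B x 0 u

/-- The output of the linearization at `x` in its steady state under the constant input `u`. -/
def linSteadyOutput (f0 : (Fin n → ℝ) → Fin n → ℝ) (h0 : (Fin n → ℝ) → Fin p → ℝ)
    (B : Matrix (Fin n) (Fin m) ℝ) (D : Matrix (Fin p) (Fin m) ℝ) (x : Fin n → ℝ)
    (u : Fin m → ℝ) : Fin p → ℝ :=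
  hlin h0 D x (linSteadyState f0 B x u) u

/-- `(xs, us)` is an optimal reachable steady state of the linearization at `x`: it realizes the
minimum defining `Jeqlin`. -/
def IsOptSteady (f0 : (Fin n → ℝ) → Fin n → ℝ) (h0 : (Fin n → ℝ) → Fin p → ℝ)
    (B : Matrix (Fin n) (Fin m) ℝ) (D : Matrix (Fin p) (Fin m) ℝ) (Us : Set (Fin m → ℝ))
    (S : Matrix (Fin p) (Fin p) ℝ) (yr : Fin p → ℝ) (x xs : Fin n → ℝ) (us : Fin m → ℝ) : Prop :=
  (xs, us) ∈ Zlin f0 B Us x ∧ ∀ z ∈ Zlin f0 B Us x,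
    qn S (hlin h0 D x xs us - yr) ≤ qn S (hlin h0 D x z.1 z.2 - yr)

section SteadyState

variable {f0 : (Fin n → ℝ) → Fin n → ℝ} {h0 : (Fin n → ℝ) → Fin p → ℝ}
  {B : Matrix (Fin n) (Fin m) ℝ} {D : Matrix (Fin p) (Fin m) ℝ} {Us : Set (Fin m → ℝ)}
  {S : Matrix (Fin p) (Fin p) ℝ} {yr : Fin p → ℝ} {σs σl : ℝ}

theorem hlin_midpoint (x : Fin n → ℝ) (z z' : (Fin n → ℝ) × (Fin m → ℝ)) :
    hlin h0 D x (midpoint ℝ z z').1 (midpoint ℝ z z').2 =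
      midpoint ℝ (hlin h0 D x z.1 z.2) (hlin h0 D x z'.1 z'.2) := by
  simp only [midpoint_eq_smul_add, hlin, Prod.smul_fst, Prod.smul_snd, Prod.fst_add, Prod.snd_add,
    Matrix.mulVec_add, Matrix.mulVec_smul, invOf_eq_inv]
  module

theorem midpoint_mem_Zlin (hUs : Convex ℝ Us) {x : Fin n → ℝ} {z z' : (Fin n → ℝ) × (Fin m → ℝ)}
    (hz : z ∈ Zlin f0 B Us x) (hz' : z' ∈ Zlin f0 B Us x) :
    midpoint ℝ z z' ∈ Zlin f0 B Us x := by
  refine ⟨hUs.midpoint_mem hz.1 hz'.1, ?_⟩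
  calc (midpoint ℝ z z').1 = midpoint ℝ (flin f0 B x z.1 z.2) (flin f0 B x z'.1 z'.2) := by
        rw [← hz.2, ← hz'.2]
        rfl
    _ = _ := (hlin_midpoint x z z').symm

theorem isUnit_one_sub_jac (hA4 : A4holds f0 σl) (hσl : 0 < σl) (x : Fin n → ℝ) :
    IsUnit (1 - jac f0 x) := by
  refine Matrix.mulVec_injective_iff_isUnit.1
    ((injective_iff_map_eq_zero (Matrix.mulVecLin _)).2 fun v hv => ?_)
  have hzero : en v = 0 := by
    have hle := hA4 x v
    rw [Matrix.mulVecLin_apply, Matrix.sub_mulVec, Matrix.one_mulVec] at hv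
    rw [hv, en_eq_norm_toLp 0, WithLp.toLp_zero, norm_zero] at hle
    exact (nonpos_of_mul_nonpos_right hle hσl).antisymm (en_nonneg v)
  simpa [en_eq_norm_toLp] using hzero

theorem isBigO_sub_jac_mulVec (hA4 : A4holds f0 σl) (hσl : 0 < σl) (x v : ι → Fin n → ℝ) :
    v =O[l] fun i => v i - jac f0 (x i) *ᵥ v i := by
  refine (isTheta_en v).2.trans (IsBigO.trans ?_ (isTheta_en _).1)
  refine IsBigO.of_bound σl⁻¹ (Eventually.of_forall fun i => ?_)
  rw [Real.norm_of_nonneg (en_nonneg _), Real.norm_of_nonneg (en_nonneg _), inv_mul_eq_div,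
    le_div_iff₀' hσl]
  exact hA4 (x i) (v i)

theorem eq_flin_iff_eq_linSteadyState (hA4 : A4holds f0 σl) (hσl : 0 < σl) (x z : Fin n → ℝ)
    (u : Fin m → ℝ) : z = flin f0 B x z u ↔ z = linSteadyState f0 B x u := by
  have hdet := (Matrix.isUnit_iff_isUnit_det _).1 (isUnit_one_sub_jac hA4 hσl x)
  have hflin : flin f0 B x z u = jac f0 x *ᵥ z + flin f0 B x 0 u := by
    simp only [flin, Matrix.mulVec_zero]
    abel
  have hsub : (1 - jac f0 x) *ᵥ z = z - jac f0 x *ᵥ z := by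
    rw [Matrix.sub_mulVec, Matrix.one_mulVec]
  rw [hflin, ← sub_eq_iff_eq_add', ← hsub]
  constructor <;> intro h
  · rw [linSteadyState, ← h, Matrix.mulVec_mulVec, Matrix.nonsing_inv_mul _ hdet,
      Matrix.one_mulVec]
  · rw [h, linSteadyState, Matrix.mulVec_mulVec, Matrix.mul_nonsing_inv _ hdet, Matrix.one_mulVec]

theorem eq_linSteadyState_of_mem_Zlin (hA4 : A4holds f0 σl) (hσl : 0 < σl) {x xs : Fin n → ℝ}
    {u : Fin m → ℝ} (h : (xs, u) ∈ Zlin f0 B Us x) : xs = linSteadyState f0 B x u :=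
  (eq_flin_iff_eq_linSteadyState hA4 hσl _ _ _).1 h.2

theorem linSteadyState_mem_Zlin (hA4 : A4holds f0 σl) (hσl : 0 < σl) (x : Fin n → ℝ)
    {u : Fin m → ℝ} (hu : u ∈ Us) : (linSteadyState f0 B x u, u) ∈ Zlin f0 B Us x :=
  ⟨hu, (eq_flin_iff_eq_linSteadyState hA4 hσl _ _ _).2 rfl⟩

theorem isBigO_linSteadyState_sub (hf : ContDiff ℝ 2 f0) (hA4 : A4holds f0 σl) (hσl : 0 < σl)
    {x x' : ι → Fin n → ℝ} {u : ι → Fin m → ℝ} {s t : ι → ℝ} (hx : x =O[l] fun _ => (1 : ℝ))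
    (hx' : x' =O[l] fun _ => (1 : ℝ)) (hxx' : (fun i => x' i - x i) =O[l] s)
    (hz : (fun i => linSteadyState f0 B (x i) (u i) - x' i) =O[l] t) (hst : s =O[l] t) :
    (fun i => linSteadyState f0 B (x' i) (u i) - linSteadyState f0 B (x i) (u i)) =O[l]
      fun i => s i * t i := by
  refine (isBigO_sub_jac_mulVec hA4 hσl x' _).trans
    ((isBigO_hlin_sub_hlin_of_point hf B u hx hx' hxx' hz hst).congr_left fun i => ?_)
  set z := linSteadyState f0 B (x i) (u i) with z_eq
  set z' := linSteadyState f0 B (x' i) (u i) with z'_eq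
  rw [← eq_flin_iff_eq_linSteadyState hA4 hσl] at z_eq z'_eq
  have hjac := hlin_sub_hlin f0 B (x' i) z' z (u i) (u i)
  rw [sub_self, Matrix.mulVec_zero, add_zero] at hjac
  rw [← hjac]
  calc hlin f0 B (x' i) z (u i) - hlin f0 B (x i) z (u i)
      = hlin f0 B (x' i) z (u i) - z := congrArg _ z_eq.symm
    _ = z' - z - (z' - hlin f0 B (x' i) z (u i)) := by abel
    _ = _ := congrArg (fun w => z' - z - (w - hlin f0 B (x' i) z (u i))) z'_eq

theorem isBigO_linSteadyOutput_sub (hf : ContDiff ℝ 2 f0) (hh : ContDiff ℝ 2 h0)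
    (hA4 : A4holds f0 σl) (hσl : 0 < σl) (D : Matrix (Fin p) (Fin m) ℝ)
    {x x' : ι → Fin n → ℝ} {u : ι → Fin m → ℝ} {s t : ι → ℝ} (hx : x =O[l] fun _ => (1 : ℝ))
    (hx' : x' =O[l] fun _ => (1 : ℝ)) (hxx' : (fun i => x' i - x i) =O[l] s)
    (hz : (fun i => linSteadyState f0 B (x i) (u i) - x' i) =O[l] t) (hst : s =O[l] t) :
    (fun i => linSteadyOutput f0 h0 B D (x' i) (u i) - linSteadyOutput f0 h0 B D (x i) (u i)) =O[l]
      fun i => s i * t i := by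
  have moved := (isBigO_jac_mulVec (hh.of_le one_le_two) hx' _).trans
    (isBigO_linSteadyState_sub (B := B) hf hA4 hσl hx hx' hxx' hz hst)
  refine (moved.add (isBigO_hlin_sub_hlin_of_point hh D u hx hx' hxx' hz hst)).congr_left
    fun i => ?_
  have hjac := hlin_sub_hlin h0 D (x' i) (linSteadyState f0 B (x' i) (u i))
    (linSteadyState f0 B (x i) (u i)) (u i) (u i)
  rw [sub_self, Matrix.mulVec_zero, add_zero] at hjac
  rw [← hjac, sub_add_sub_cancel, linSteadyOutput, linSteadyOutput]

theorem isBigO_hlin_sub_of_mem_Zlin (hA2 : A2holds f0 h0 B D σs) (hσs : 0 < σs)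
    {x : ι → Fin n → ℝ} {z z' : ι → (Fin n → ℝ) × (Fin m → ℝ)}
    (hz : ∀ i, z i ∈ Zlin f0 B Us (x i)) (hz' : ∀ i, z' i ∈ Zlin f0 B Us (x i)) :
    (fun i => (z i).1 - (z' i).1) =O[l]
      fun i => hlin h0 D (x i) (z i).1 (z i).2 - hlin h0 D (x i) (z' i).1 (z' i).2 := by
  refine (isTheta_en _).2.trans (IsBigO.trans ?_ (isTheta_en _).1)
  refine IsBigO.of_bound σs⁻¹ (Eventually.of_forall fun i => ?_)
  rw [Real.norm_of_nonneg (en_nonneg _), Real.norm_of_nonneg (en_nonneg _), inv_mul_eq_div,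
    le_div_iff₀' hσs, hlin_sub_hlin]
  have hstate : jac f0 (x i) *ᵥ ((z i).1 - (z' i).1) - ((z i).1 - (z' i).1) +
      B *ᵥ ((z i).2 - (z' i).2) = 0 := by
    rw [sub_add_eq_add_sub, ← hlin_sub_hlin f0 B (x i), sub_eq_zero]
    exact (congrArg₂ _ (hz i).2 (hz' i).2).symm
  have hle := hA2 (x i) ((z i).1 - (z' i).1) ((z i).2 - (z' i).2)
  rw [hstate, en_eq_norm_toLp 0, WithLp.toLp_zero, norm_zero, zero_pow two_ne_zero, zero_add,
    Real.sqrt_sq (en_nonneg _)] at hle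
  refine (mul_le_mul_of_nonneg_left ?_ hσs.le).trans hle
  exact Real.le_sqrt_of_sq_le (le_add_of_nonneg_right (sq_nonneg _))

theorem Jeqlin_eq_of_isOptSteady {x xs : Fin n → ℝ} {us : Fin m → ℝ}
    (h : IsOptSteady f0 h0 B D Us S yr x xs us) :
    Jeqlin f0 h0 B D Us S yr x = qn S (hlin h0 D x xs us - yr) :=
  IsLeast.csInf_eq ⟨⟨_, h.1, rfl⟩, by rintro _ ⟨z, hz, rfl⟩; exact h.2 z hz⟩

theorem qn_hlin_sub_hlin_le_of_isOptSteady (hUs : Convex ℝ Us) {x xs : Fin n → ℝ}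
    {us : Fin m → ℝ} (h : IsOptSteady f0 h0 B D Us S yr x xs us)
    {z : (Fin n → ℝ) × (Fin m → ℝ)} (hz : z ∈ Zlin f0 B Us x) :
    qn S (hlin h0 D x z.1 z.2 - hlin h0 D x xs us) ≤
      2 * (qn S (hlin h0 D x z.1 z.2 - yr) - qn S (hlin h0 D x xs us - yr)) := by
  have hmid := h.2 _ (midpoint_mem_Zlin hUs hz h.1)
  have hsub : midpoint ℝ (hlin h0 D x z.1 z.2) (hlin h0 D x xs us) - yr =
      midpoint ℝ (hlin h0 D x z.1 z.2 - yr) (hlin h0 D x xs us - yr) := by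
    simp only [midpoint_eq_smul_add, invOf_eq_inv]
    module
  rw [hlin_midpoint, hsub] at hmid
  simpa using qn_sub_le_of_le_midpoint hmid

theorem isBigO_hlin_sub_of_isOptSteady (hS : S.PosDef) {x xs : ι → Fin n → ℝ}
    {us : ι → Fin m → ℝ} {z : ι → (Fin n → ℝ) × (Fin m → ℝ)} {t : ι → ℝ}
    (hopt : ∀ i, IsOptSteady f0 h0 B D Us S yr (x i) (xs i) (us i))
    (hz : ∀ i, z i ∈ Zlin f0 B Us (x i))
    (hzt : (fun i => hlin h0 D (x i) (z i).1 (z i).2 - yr) =O[l] t) :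
    (fun i => hlin h0 D (x i) (xs i) (us i) - yr) =O[l] t :=
  (isBigO_qn_sq_iff hS).1 ((isBigO_of_nonneg_of_le (fun _ => qn_nonneg hS _)
    fun i => (hopt i).2 _ (hz i)).trans ((isBigO_qn_sq_iff hS).2 hzt))

section TwoPoints

variable {x x' xs xs' : ι → Fin n → ℝ} {us us' : ι → Fin m → ℝ} {s t r : ι → ℝ}

theorem isBigO_linSteadyOutput_sub_hlin (hf : ContDiff ℝ 2 f0) (hh : ContDiff ℝ 2 h0)
    (hA4 : A4holds f0 σl) (hσl : 0 < σl) (hz : ∀ i, (xs i, us i) ∈ Zlin f0 B Us (x i))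
    (hx : x =O[l] fun _ => (1 : ℝ)) (hx' : x' =O[l] fun _ => (1 : ℝ))
    (hxx' : (fun i => x' i - x i) =O[l] s) (hxs : (fun i => xs i - x' i) =O[l] r)
    (hsr : s =O[l] r) :
    (fun i => linSteadyOutput f0 h0 B D (x' i) (us i) - hlin h0 D (x i) (xs i) (us i)) =O[l]
      fun i => s i * r i := by
  obtain rfl : xs = fun i => linSteadyState f0 B (x i) (us i) :=
    funext fun i => eq_linSteadyState_of_mem_Zlin hA4 hσl (hz i)
  exact isBigO_linSteadyOutput_sub hf hh hA4 hσl D hx hx' hxx' hxs hsr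

theorem isBigO_hlin_optSteady_sub_setpoint (hf : ContDiff ℝ 2 f0) (hh : ContDiff ℝ 2 h0)
    (hA4 : A4holds f0 σl) (hσl : 0 < σl) (hS : S.PosDef)
    (hz : ∀ i, (xs i, us i) ∈ Zlin f0 B Us (x i))
    (hopt' : ∀ i, IsOptSteady f0 h0 B D Us S yr (x' i) (xs' i) (us' i))
    (hx : x =O[l] fun _ => (1 : ℝ)) (hx' : x' =O[l] fun _ => (1 : ℝ))
    (hxx' : (fun i => x' i - x i) =O[l] s) (hxs : (fun i => xs i - x' i) =O[l] s)
    (hy : (fun i => hlin h0 D (x i) (xs i) (us i) - yr) =O[l] t)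
    (hst : s =O[l] t) (ht : t =O[l] fun _ => (1 : ℝ)) :
    (fun i => hlin h0 D (x' i) (xs' i) (us' i) - yr) =O[l] t := by
  have transfer := isBigO_linSteadyOutput_sub_hlin (D := D) hf hh hA4 hσl hz hx hx' hxx' hxs
    (isBigO_refl s l)
  have s_sq : (fun i => s i * s i) =O[l] t := by simpa using hst.mul (hst.trans ht)
  exact isBigO_hlin_sub_of_isOptSteady hS hopt'
    (fun i => linSteadyState_mem_Zlin hA4 hσl (x' i) (hz i).1)
    (((transfer.trans s_sq).add hy).congr_left fun i => sub_add_sub_cancel _ _ _)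

theorem isBigO_qn_linSteadyOutput_sub (hf : ContDiff ℝ 2 f0) (hh : ContDiff ℝ 2 h0)
    (hA4 : A4holds f0 σl) (hσl : 0 < σl) (S : Matrix (Fin p) (Fin p) ℝ)
    (hz : ∀ i, (xs i, us i) ∈ Zlin f0 B Us (x i))
    (hx : x =O[l] fun _ => (1 : ℝ)) (hx' : x' =O[l] fun _ => (1 : ℝ))
    (hxx' : (fun i => x' i - x i) =O[l] s) (hxs : (fun i => xs i - x' i) =O[l] r)
    (hy : (fun i => hlin h0 D (x i) (xs i) (us i) - yr) =O[l] t)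
    (hsr : s =O[l] r) (hr : r =O[l] fun _ => (1 : ℝ)) (hst : s =O[l] t) :
    (fun i => qn S (linSteadyOutput f0 h0 B D (x' i) (us i) - yr) -
      qn S (hlin h0 D (x i) (xs i) (us i) - yr)) =O[l] fun i => t i * (s i * r i) := by
  have transfer := isBigO_linSteadyOutput_sub_hlin (D := D) hf hh hA4 hσl hz hx hx' hxx' hxs hsr
  refine (isBigO_qn_add_sub_qn S hy transfer (by simpa using hst.mul hr)).congr_left fun i => ?_
  rw [add_comm, sub_add_sub_cancel]

theorem isBigO_optSteady_sub_point_add (hf : ContDiff ℝ 2 f0) (hA2 : A2holds f0 h0 B D σs)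
    (hσs : 0 < σs) (hA4 : A4holds f0 σl) (hσl : 0 < σl)
    (hz : ∀ i, (xs i, us i) ∈ Zlin f0 B Us (x i))
    (hz' : ∀ i, (xs' i, us' i) ∈ Zlin f0 B Us (x' i))
    (hx : x =O[l] fun _ => (1 : ℝ)) (hx' : x' =O[l] fun _ => (1 : ℝ))
    (hxx' : (fun i => x' i - x i) =O[l] s) (hxs : (fun i => xs i - x' i) =O[l] s)
    (hs : s =O[l] fun _ => (1 : ℝ)) :
    (fun i => xs' i - x i) =O[l] fun i => ‖s i‖ +
      ‖linSteadyOutput f0 h0 B D (x' i) (us i) - hlin h0 D (x' i) (xs' i) (us' i)‖ := by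
  obtain rfl : xs = fun i => linSteadyState f0 B (x i) (us i) :=
    funext fun i => eq_linSteadyState_of_mem_Zlin hA4 hσl (hz i)
  have moved : (fun i => linSteadyState f0 B (x' i) (us i) - linSteadyState f0 B (x i) (us i))
      =O[l] s :=
    (isBigO_linSteadyState_sub hf hA4 hσl hx hx' hxx' hxs (isBigO_refl s l)).trans
      (by simpa using (isBigO_refl s l).mul hs)
  have inverse := isBigO_hlin_sub_of_mem_Zlin (l := l) hA2 hσs
    (fun i => linSteadyState_mem_Zlin hA4 hσl (x' i) (hz i).1) hz'
  refine IsBigO.congr_left (IsBigO.sub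
    (((moved.add hxs).add hxx').trans (IsBigO.of_norm_le fun i => ?_))
    (inverse.trans (IsBigO.of_norm_le fun i => ?_))) fun i => ?_
  · exact le_add_of_nonneg_right (norm_nonneg _)
  · exact le_add_of_nonneg_left (norm_nonneg _)
  · abel

theorem isBigO_optSteady_sub_point (hf : ContDiff ℝ 2 f0) (hh : ContDiff ℝ 2 h0)
    (hA2 : A2holds f0 h0 B D σs) (hσs : 0 < σs) (hA4 : A4holds f0 σl) (hσl : 0 < σl)
    (hUs : Convex ℝ Us) (hS : S.PosDef)
    (hopt : ∀ i, IsOptSteady f0 h0 B D Us S yr (x i) (xs i) (us i))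
    (hopt' : ∀ i, IsOptSteady f0 h0 B D Us S yr (x' i) (xs' i) (us' i))
    (hx : x =O[l] fun _ => (1 : ℝ)) (hx' : x' =O[l] fun _ => (1 : ℝ))
    (hxs' : xs' =O[l] fun _ => (1 : ℝ)) (hxx' : (fun i => x' i - x i) =O[l] s)
    (hxs : (fun i => xs i - x' i) =O[l] s)
    (hy : (fun i => hlin h0 D (x i) (xs i) (us i) - yr) =O[l] t)
    (hst : s =O[l] t) (ht : t =O[l] fun _ => (1 : ℝ)) :
    (fun i => xs' i - x i) =O[l] s := by
  have hy' := isBigO_hlin_optSteady_sub_setpoint hf hh hA4 hσl hS (fun i => (hopt i).1) hopt'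
    hx hx' hxx' hxs hy hst ht
  have near := isBigO_optSteady_sub_point_add hf hA2 hσs hA4 hσl (fun i => (hopt i).1)
    (fun i => (hopt' i).1) hx hx' hxx' hxs (hst.trans ht)
  set d := fun i => linSteadyOutput f0 h0 B D (x' i) (us i) - hlin h0 D (x' i) (xs' i) (us' i)
  set r := fun i => ‖s i‖ + ‖xs' i - x i‖
  have hsd : s =O[l] fun i => ‖s i‖ + ‖d i‖ :=
    IsBigO.of_norm_le fun i => le_add_of_nonneg_right (norm_nonneg _)
  have hsr : s =O[l] r := IsBigO.of_norm_le fun i => le_add_of_nonneg_right (norm_nonneg _)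
  have hrd : r =O[l] fun i => ‖s i‖ + ‖d i‖ := hsd.norm_left.add near.norm_left
  have cost_at_x' := isBigO_qn_linSteadyOutput_sub hf hh hA4 hσl S (fun i => (hopt i).1)
    hx hx' hxx' hxs hy (isBigO_refl s l) (hst.trans ht) hst
  have cost_at_x := isBigO_qn_linSteadyOutput_sub hf hh hA4 hσl S (fun i => (hopt' i).1)
    hx' hx hxx'.symm (IsBigO.of_norm_le fun i => le_add_of_nonneg_left (norm_nonneg _)) hy' hsr
    ((hst.trans ht).norm_left.add (hxs'.sub hx).norm_left) hst
  have absorb {q : ι → ℝ} (hq : q =O[l] fun i => ‖s i‖ + ‖d i‖) :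
      (fun i => t i * (s i * q i)) =O[l] fun i => s i * (‖s i‖ + ‖d i‖) := by
    simpa using ht.mul ((isBigO_refl s l).mul hq)
  -- No bound on `xs' - x`, hence on `d`, is available yet, so comparing the two optima only gives
  -- `‖d‖² = O(s (s + ‖d‖))`; this estimate bounds `d` by itself.
  have gap : (fun i => qn S (d i)) =O[l] fun i => s i * (‖s i‖ + ‖d i‖) := by
    refine (isBigO_of_nonneg_of_le (fun _ => qn_nonneg hS _) fun i => ?_).trans
      (((cost_at_x'.trans (absorb hsd)).add (cost_at_x.trans (absorb hrd))).const_mul_left 2)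
    have better_x' := qn_hlin_sub_hlin_le_of_isOptSteady hUs (hopt' i)
      (linSteadyState_mem_Zlin hA4 hσl (x' i) (hopt i).1.1)
    have better_x := (hopt i).2 _ (linSteadyState_mem_Zlin hA4 hσl (x i) (hopt' i).1.1)
    simp only [d, linSteadyOutput] at better_x better_x' ⊢
    linarith
  have hds : d =O[l] s := isBigO_of_norm_sq_isBigO_mul_add ((isTheta_qn hS d).2.trans gap)
  exact near.trans ((isBigO_refl s l).norm_left.add hds.norm_left)

theorem exists_isBigO_Jeqlin_le_add (hf : ContDiff ℝ 2 f0) (hh : ContDiff ℝ 2 h0)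
    (hA2 : A2holds f0 h0 B D σs) (hσs : 0 < σs) (hA4 : A4holds f0 σl) (hσl : 0 < σl)
    (hUs : Convex ℝ Us) (hS : S.PosDef)
    (hopt : ∀ i, IsOptSteady f0 h0 B D Us S yr (x i) (xs i) (us i))
    (hopt' : ∀ i, IsOptSteady f0 h0 B D Us S yr (x' i) (xs' i) (us' i))
    (hx : x =O[l] fun _ => (1 : ℝ)) (hx' : x' =O[l] fun _ => (1 : ℝ))
    (hxs' : xs' =O[l] fun _ => (1 : ℝ)) (hxx' : (fun i => x' i - x i) =O[l] s)
    (hxs : (fun i => xs i - x' i) =O[l] s)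
    (hy : (fun i => hlin h0 D (x i) (xs i) (us i) - yr) =O[l] t)
    (hst : s =O[l] t) (ht : t =O[l] fun _ => (1 : ℝ)) :
    ∃ q : ι → ℝ, (q =O[l] fun i => t i * s i ^ 2) ∧ ∀ i, Jeqlin f0 h0 B D Us S yr (x i) ≤
      Jeqlin f0 h0 B D Us S yr (x' i) + q i := by
  have hxs'x := isBigO_optSteady_sub_point hf hh hA2 hσs hA4 hσl hUs hS hopt hopt' hx hx' hxs' hxx'
    hxs hy hst ht
  have hy' := isBigO_hlin_optSteady_sub_setpoint hf hh hA4 hσl hS (fun i => (hopt i).1) hopt'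
    hx hx' hxx' hxs hy hst ht
  have cost_at_x := isBigO_qn_linSteadyOutput_sub hf hh hA4 hσl S (fun i => (hopt' i).1)
    hx' hx hxx'.symm hxs'x hy' (isBigO_refl s l) (hst.trans ht) hst
  simp only [← sq] at cost_at_x
  refine ⟨_, cost_at_x, fun i => ?_⟩
  have better := (hopt i).2 _ (linSteadyState_mem_Zlin hA4 hσl (x i) (hopt' i).1.1)
  rw [Jeqlin_eq_of_isOptSteady (hopt i), Jeqlin_eq_of_isOptSteady (hopt' i), linSteadyOutput]
  linarith

end TwoPoints

end SteadyState

/-- The `N`-step reachability Gramian of the pair `(A, B)`, whose range is the set of states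
reachable from the origin in `N` steps. -/
def reachGramian (A : Matrix (Fin n) (Fin n) ℝ) (B : Matrix (Fin n) (Fin m) ℝ) (N : ℕ) :
    Matrix (Fin n) (Fin n) ℝ :=
  ∑ k ∈ Finset.range N, (A ^ k * B) * (A ^ k * B)ᵀ

/-- The trajectory of the linearization at `x` that starts in `x` itself, as predicted by the
tracking MPC problem. -/
def linRollout (f0 : (Fin n → ℝ) → Fin n → ℝ) (B : Matrix (Fin n) (Fin m) ℝ) (x : Fin n → ℝ)
    (u : ℕ → Fin m → ℝ) : ℕ → Fin n → ℝ
  | 0 => x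
  | k + 1 => flin f0 B x (linRollout f0 B x u k) (u k)

section Controllability

variable {A : Matrix (Fin n) (Fin n) ℝ} {B : Matrix (Fin n) (Fin m) ℝ} {μ : ℝ} {N : ℕ}

theorem reachGramian_mulVec (A : Matrix (Fin n) (Fin n) ℝ) (B : Matrix (Fin n) (Fin m) ℝ) (N : ℕ)
    (v : Fin n → ℝ) : reachGramian A B N *ᵥ v =
      ∑ k ∈ Finset.range N, (A ^ k * B) *ᵥ (A ^ k * B)ᵀ *ᵥ v := by
  simp only [reachGramian, Matrix.sum_mulVec, Matrix.mulVec_mulVec]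

theorem dotProduct_reachGramian_mulVec (A : Matrix (Fin n) (Fin n) ℝ)
    (B : Matrix (Fin n) (Fin m) ℝ) (N : ℕ) (v : Fin n → ℝ) :
    v ⬝ᵥ reachGramian A B N *ᵥ v = ∑ k ∈ Finset.range N, en ((A ^ k * B)ᵀ *ᵥ v) ^ 2 := by
  simp only [reachGramian_mulVec, dotProduct_sum, en_sq_eq_dotProduct, Matrix.dotProduct_mulVec,
    Matrix.mulVec_transpose]

theorem isUnit_reachGramian (hμ : 0 < μ)
    (h : ∀ v, μ * en v ≤ √(∑ k ∈ Finset.range N, en ((A ^ k * B)ᵀ *ᵥ v) ^ 2)) :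
    IsUnit (reachGramian A B N) := by
  refine Matrix.mulVec_injective_iff_isUnit.1
    ((injective_iff_map_eq_zero (Matrix.mulVecLin _)).2 fun v hv => ?_)
  rw [Matrix.mulVecLin_apply] at hv
  have hle := h v
  rw [← dotProduct_reachGramian_mulVec, hv, dotProduct_zero, Real.sqrt_zero] at hle
  have hzero : en v = 0 := (nonpos_of_mul_nonpos_right hle hμ).antisymm (en_nonneg v)
  simpa [en_eq_norm_toLp] using hzero

theorem exists_sum_pow_mul_mulVec_eq (hμ : 0 < μ)
    (h : ∀ v, μ * en v ≤ √(∑ k ∈ Finset.range N, en ((A ^ k * B)ᵀ *ᵥ v) ^ 2)) (ξ : Fin n → ℝ) :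
    ∃ w : ℕ → Fin m → ℝ, ∑ k ∈ Finset.range N, (A ^ k * B) *ᵥ w k = ξ ∧
      ∀ k < N, μ * en (w k) ≤ en ξ := by
  obtain ⟨v, rfl⟩ := Matrix.mulVec_surjective_iff_isUnit.2 (isUnit_reachGramian hμ h) ξ
  -- The minimum-energy input. Its energy is `e ^ 2 = v ⬝ᵥ ξ ≤ ‖v‖ ‖ξ‖` while `μ ‖v‖ ≤ e`, hence
  -- `μ e ≤ ‖ξ‖`.
  refine ⟨fun k => (A ^ k * B)ᵀ *ᵥ v, (reachGramian_mulVec A B N v).symm, fun k hk => ?_⟩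
  have energy_nonneg : 0 ≤ ∑ k ∈ Finset.range N, en ((A ^ k * B)ᵀ *ᵥ v) ^ 2 :=
    Finset.sum_nonneg fun _ _ => sq_nonneg _
  set e := √(∑ k ∈ Finset.range N, en ((A ^ k * B)ᵀ *ᵥ v) ^ 2) with e_def
  have input_le : en ((A ^ k * B)ᵀ *ᵥ v) ≤ e := Real.le_sqrt_of_sq_le
    (Finset.single_le_sum (f := fun k => en ((A ^ k * B)ᵀ *ᵥ v) ^ 2) (fun _ _ => sq_nonneg _)
      (Finset.mem_range.2 hk))
  have energy_le : e ^ 2 ≤ en v * en (reachGramian A B N *ᵥ v) := by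
    rw [e_def, Real.sq_sqrt energy_nonneg, ← dotProduct_reachGramian_mulVec]
    exact dotProduct_le_en_mul_en _ _
  refine (mul_le_mul_of_nonneg_left input_le hμ.le).trans ?_
  have e_nonneg : 0 ≤ e := Real.sqrt_nonneg _
  rcases e_nonneg.eq_or_lt with e_zero | e_pos
  · rw [← e_zero, mul_zero]
    exact en_nonneg _
  · refine le_of_mul_le_mul_left ?_ e_pos
    nlinarith [mul_le_mul_of_nonneg_right (h v) (en_nonneg (reachGramian A B N *ᵥ v))]

theorem mul_en_le_sqrt_sum_of_A3holds {f0 : (Fin n → ℝ) → Fin n → ℝ} (hA3 : A3holds f0 B μ)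
    (hN : n ≤ N) (x v : Fin n → ℝ) :
    μ * en v ≤ √(∑ k ∈ Finset.range N, en ((jac f0 x ^ k * B)ᵀ *ᵥ v) ^ 2) :=
  (hA3 x v).trans (Real.sqrt_le_sqrt
    (Finset.sum_le_sum_of_subset_of_nonneg (Finset.range_mono hN) fun _ _ _ => sq_nonneg _))

end Controllability

section Trajectories

variable {f0 : (Fin n → ℝ) → Fin n → ℝ} {B : Matrix (Fin n) (Fin m) ℝ} {μ : ℝ} {N : ℕ}

theorem linRollout_add (x : Fin n → ℝ) (v w : ℕ → Fin m → ℝ) (k : ℕ) :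
    linRollout f0 B x (v + w) k = linRollout f0 B x v k +
      ∑ j ∈ Finset.range k, (jac f0 x ^ j * B) *ᵥ w (k - 1 - j) := by
  induction k with
  | zero => simp [linRollout]
  | succ k ih =>
    have shift : jac f0 x *ᵥ (∑ j ∈ Finset.range k, (jac f0 x ^ j * B) *ᵥ w (k - 1 - j)) =
        ∑ j ∈ Finset.range k, (jac f0 x ^ (j + 1) * B) *ᵥ w (k - (j + 1)) := by
      rw [Matrix.mulVec_sum]
      refine Finset.sum_congr rfl fun j _ => ?_
      rw [Matrix.mulVec_mulVec, ← Matrix.mul_assoc, ← pow_succ', Nat.sub_sub, add_comm 1]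
    have step := hlin_sub_hlin f0 B x (linRollout f0 B x (v + w) k) (linRollout f0 B x v k)
      (v k + w k) (v k)
    rw [sub_eq_iff_eq_add', ih, add_sub_cancel_left, add_sub_cancel_left, shift] at step
    rw [Nat.add_sub_cancel, Finset.sum_range_succ', pow_zero, Matrix.one_mul, Nat.sub_zero,
      linRollout, ih]
    exact step

variable {x : ι → Fin n → ℝ} {z : ι → ℕ → Fin n → ℝ} {v u : ι → ℕ → Fin m → ℝ} {s : ι → ℝ}

theorem isBigO_linRollout_sub (hf : ContDiff ℝ 2 f0) (hx : x =O[l] fun _ => (1 : ℝ))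
    (hz0 : (fun i => x i - z i 0) =O[l] s)
    (hz : ∀ k < N, (fun i => flin f0 B (x i) (z i k) (v i k) - z i (k + 1)) =O[l] s)
    (huv : ∀ k < N, (fun i => u i k - v i k) =O[l] s) :
    ∀ k ≤ N, (fun i => linRollout f0 B (x i) (u i) k - z i k) =O[l] s := by
  intro k
  induction k with
  | zero => exact fun _ => hz0
  | succ k ih =>
    intro hk
    have propagated := (isBigO_jac_mulVec (hf.of_le one_le_two) hx _).trans (ih (by omega))
    refine ((propagated.add ((isBigO_mulVec B _).trans (huv k hk))).add (hz k hk)).congr_left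
      fun i => ?_
    rw [← hlin_sub_hlin f0 B (x i)]
    exact sub_add_sub_cancel _ _ _

theorem exists_linRollout_eq (hf : ContDiff ℝ 2 f0) (hμ : 0 < μ) (hA3 : A3holds f0 B μ)
    (hN : n ≤ N) {ξ : ι → Fin n → ℝ} (hx : x =O[l] fun _ => (1 : ℝ))
    (hz0 : (fun i => x i - z i 0) =O[l] s)
    (hz : ∀ k < N, (fun i => flin f0 B (x i) (z i k) (v i k) - z i (k + 1)) =O[l] s)
    (hξ : (fun i => ξ i - z i N) =O[l] s) :
    ∃ u : ι → ℕ → Fin m → ℝ, (∀ i, linRollout f0 B (x i) (u i) N = ξ i) ∧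
      ∀ k < N, (fun i => u i k - v i k) =O[l] s := by
  choose w hw hw_le using fun i => exists_sum_pow_mul_mulVec_eq hμ
    (mul_en_le_sqrt_sum_of_A3holds hA3 hN (x i)) (ξ i - linRollout f0 B (x i) (v i) N)
  have miss : (fun i => ξ i - linRollout f0 B (x i) (v i) N) =O[l] s :=
    (hξ.sub (isBigO_linRollout_sub hf hx hz0 hz (fun k _ => by simp [isBigO_zero]) N
      le_rfl)).congr_left fun i => sub_sub_sub_cancel_right _ _ _
  have correction {k : ℕ} (hk : k < N) : (fun i => w i k) =O[l] s := by
    refine ((isTheta_en _).2.trans (IsBigO.trans ?_ (isTheta_en _).1)).trans miss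
    refine IsBigO.of_bound μ⁻¹ (Eventually.of_forall fun i => ?_)
    rw [Real.norm_of_nonneg (en_nonneg _), Real.norm_of_nonneg (en_nonneg _), inv_mul_eq_div,
      le_div_iff₀' hμ]
    exact hw_le i k hk
  refine ⟨fun i => v i + fun k => w i (N - 1 - k), fun i => ?_, fun k hk => ?_⟩
  · rw [linRollout_add, ← eq_sub_iff_add_eq', ← hw i]
    refine Finset.sum_congr rfl fun j hj => ?_
    rw [Finset.mem_range] at hj
    rw [show N - 1 - (N - 1 - j) = j by omega]
  · simpa using correction (by omega : N - 1 - k < N)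

theorem isBigO_rollout_sub_linRollout (hf : ContDiff ℝ 2 f0) (hx : x =O[l] fun _ => (1 : ℝ))
    (hs : s =O[l] fun _ => (1 : ℝ))
    (hL : ∀ k ≤ N, (fun i => linRollout f0 B (x i) (u i) k - x i) =O[l] s) :
    ∀ k ≤ N, (fun i => rollout f0 B (x i) (u i) k - linRollout f0 B (x i) (u i) k) =O[l]
      fun i => s i ^ 2 := by
  intro k
  induction k with
  | zero => exact fun _ => (isBigO_zero _ l).congr_left fun _ => (sub_self _).symm
  | succ k ih =>
    intro hk
    have sq_le : (fun i => s i ^ 2) =O[l] s := by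
      simpa [sq] using (isBigO_refl s l).mul hs
    have near : (fun i => rollout f0 B (x i) (u i) k - x i) =O[l] s :=
      (((ih (by omega)).trans sq_le).add (hL k (by omega))).congr_left
        fun i => sub_add_sub_cancel _ _ _
    have bounded : (fun i => rollout f0 B (x i) (u i) k) =O[l] fun _ => (1 : ℝ) :=
      ((near.trans hs).add hx).congr_left fun i => sub_add_cancel _ _
    have relinearized := isBigO_hlin_sub_hlin_of_point hf B (fun i => u i k) hx bounded near
      (z := fun i => rollout f0 B (x i) (u i) k) (t := s) (by simp [isBigO_zero]) (isBigO_refl s l)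
    have propagated := (isBigO_jac_mulVec (hf.of_le one_le_two) hx _).trans (ih (by omega))
    simp only [← sq] at relinearized
    refine (relinearized.add propagated).congr_left fun i => ?_
    have step := hlin_sub_hlin f0 B (x i) (rollout f0 B (x i) (u i) k)
      (linRollout f0 B (x i) (u i) k) (u i k) (u i k)
    rw [sub_self, Matrix.mulVec_zero, add_zero] at step
    rw [← step, sub_add_sub_cancel, hlin_self]
    rfl

end Trajectories

/-- The stage cost `‖x‖_Q² + ‖u‖_R²` of the tracking MPC problem; its arguments are the deviations
from the steady state. -/
def stageCost (Q : Matrix (Fin n) (Fin n) ℝ) (R : Matrix (Fin m) (Fin m) ℝ) (x : Fin n → ℝ)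
    (u : Fin m → ℝ) : ℝ :=
  qn Q x + qn R u

/-- The sequence that follows `a` before time `N` and rests at `c` from then on. It prolongs a
feasible trajectory of the tracking MPC problem, which ends in its steady state, past the
horizon. -/
def extendConst {α : Type*} (N : ℕ) (a : ℕ → α) (c : α) (k : ℕ) : α :=
  if k < N then a k else c

theorem extendConst_of_lt {α : Type*} {N : ℕ} {a : ℕ → α} {c : α} (hk : k < N) :
    extendConst N a c k = a k :=
  if_pos hk

theorem extendConst_of_ge {α : Type*} {N : ℕ} {a : ℕ → α} {c : α} (hk : N ≤ k) :
    extendConst N a c k = c :=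
  if_neg hk.not_gt

theorem extendConst_of_le {α : Type*} {N : ℕ} {a : ℕ → α} {c : α} (ha : a N = c) (hk : k ≤ N) :
    extendConst N a c k = a k := by
  rcases hk.lt_or_eq with hk | rfl
  · exact extendConst_of_lt hk
  · exact (extendConst_of_ge le_rfl).trans ha.symm

theorem isBigO_extendConst_sub {E : Type*} [SeminormedAddCommGroup E] {N : ℕ} {a : ι → ℕ → E}
    {c : ι → E} {s : ι → ℝ} (h : ∀ k < N, (fun i => a i k - c i) =O[l] s) (k : ℕ) :
    (fun i => extendConst N (a i) (c i) k - c i) =O[l] s := by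
  rcases lt_or_ge k N with hk | hk
  · simpa only [extendConst_of_lt hk] using h k hk
  · simpa only [extendConst_of_ge hk, sub_self] using isBigO_zero s l

section StageCost

variable {Q : Matrix (Fin n) (Fin n) ℝ} {R : Matrix (Fin m) (Fin m) ℝ}

theorem stageCost_nonneg (hQ : Q.PosDef) (hR : R.PosDef) (x : Fin n → ℝ) (u : Fin m → ℝ) :
    0 ≤ stageCost Q R x u :=
  add_nonneg (qn_nonneg hQ x) (qn_nonneg hR u)

theorem stageCost_zero : stageCost Q R 0 0 = 0 := by
  simp [stageCost, qn]

theorem isBigO_stageCost_sub {x y : ι → Fin n → ℝ} {u v : ι → Fin m → ℝ} {s t : ι → ℝ}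
    (hx : x =O[l] t) (hu : u =O[l] t) (hyx : (fun i => y i - x i) =O[l] s)
    (hvu : (fun i => v i - u i) =O[l] s) (hst : s =O[l] t) :
    (fun i => stageCost Q R (y i) (v i) - stageCost Q R (x i) (u i)) =O[l]
      fun i => t i * s i := by
  refine ((isBigO_qn_add_sub_qn Q hx hyx hst).add
    (isBigO_qn_add_sub_qn R hu hvu hst)).congr_left fun i => ?_
  rw [add_sub_cancel, add_sub_cancel, stageCost, stageCost]
  ring

theorem sum_stageCost_extendConst_add {N : ℕ} (hN : n ≤ N) (x : ℕ → Fin n → ℝ)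
    (u : ℕ → Fin m → ℝ) (xs : Fin n → ℝ) (us : Fin m → ℝ) :
    ∑ k ∈ Finset.range N,
        stageCost Q R (extendConst N x xs (n + k) - xs) (extendConst N u us (n + k) - us) =
      ∑ k ∈ Finset.range N, stageCost Q R (x k - xs) (u k - us) -
        ∑ k ∈ Finset.range n, stageCost Q R (x k - xs) (u k - us) := by
  set c := fun k => stageCost Q R (extendConst N x xs k - xs) (extendConst N u us k - us)
  have early {K : ℕ} (hK : K ≤ N) : ∑ k ∈ Finset.range K, c k =
      ∑ k ∈ Finset.range K, stageCost Q R (x k - xs) (u k - us) :=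
    Finset.sum_congr rfl fun k hk => by
      simp only [c, extendConst_of_lt ((Finset.mem_range.1 hk).trans_le hK)]
  have late : ∑ k ∈ Finset.range n, c (N + k) = 0 :=
    Finset.sum_eq_zero fun k _ => by
      simp only [c, extendConst_of_ge (Nat.le_add_right N k), sub_self, stageCost_zero]
  rw [← early le_rfl, ← early hN, eq_sub_iff_add_eq', ← Finset.sum_range_add, add_comm n N,
    Finset.sum_range_add, late, add_zero]

end StageCost

section TrackingMPC

variable {f0 : (Fin n → ℝ) → Fin n → ℝ} {h0 : (Fin n → ℝ) → Fin p → ℝ}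
  {B : Matrix (Fin n) (Fin m) ℝ} {D : Matrix (Fin p) (Fin m) ℝ} {U Us : Set (Fin m → ℝ)}
  {Q : Matrix (Fin n) (Fin n) ℝ} {R : Matrix (Fin m) (Fin m) ℝ} {S : Matrix (Fin p) (Fin p) ℝ}
  {yr : Fin p → ℝ} {N : ℕ} {μ σl σs ε : ℝ}

theorem eq_linRollout_of_MPCfeas {x : Fin n → ℝ} {xb : ℕ → Fin n → ℝ} {ub : ℕ → Fin m → ℝ}
    {xs : Fin n → ℝ} {us : Fin m → ℝ} {ys : Fin p → ℝ}
    (h : MPCfeas f0 h0 B D U Us N x xb ub xs us ys) : ∀ k ≤ N, xb k = linRollout f0 B x ub k := by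
  obtain ⟨step, start, -⟩ := h
  intro k
  induction k with
  | zero => exact fun _ => start
  | succ k ih => exact fun hk => by rw [step k hk, ih (by omega), linRollout]

theorem extendConst_succ_of_MPCfeas {x : Fin n → ℝ} {xb : ℕ → Fin n → ℝ} {ub : ℕ → Fin m → ℝ}
    {xs : Fin n → ℝ} {us : Fin m → ℝ} {ys : Fin p → ℝ}
    (h : MPCfeas f0 h0 B D U Us N x xb ub xs us ys) (k : ℕ) :
    extendConst N xb xs (k + 1) =
      flin f0 B x (extendConst N xb xs k) (extendConst N ub us k) := by
  obtain ⟨step, -, final, -, steady, -⟩ := h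
  rcases lt_or_ge k N with hk | hk
  · rw [extendConst_of_lt hk, extendConst_of_lt hk, extendConst_of_le final hk, step k hk]
  · rw [extendConst_of_ge hk, extendConst_of_ge hk, extendConst_of_ge (hk.trans k.le_succ)]
    exact steady.2

theorem Jstar_le_MPCcost (hQ : Q.PosDef) (hR : R.PosDef) (hS : S.PosDef) {x : Fin n → ℝ}
    {xb : ℕ → Fin n → ℝ} {ub : ℕ → Fin m → ℝ} {xs : Fin n → ℝ} {us : Fin m → ℝ} {ys : Fin p → ℝ}
    (h : MPCfeas f0 h0 B D U Us N x xb ub xs us ys) :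
    Jstar f0 h0 B D U Us Q R S yr N x ≤ MPCcost Q R S yr N xb ub xs us ys := by
  refine csInf_le ⟨0, ?_⟩ ⟨xb, ub, xs, us, ys, h, rfl⟩
  rintro _ ⟨xb, ub, xs, us, ys, -, rfl⟩
  exact add_nonneg (Finset.sum_nonneg fun _ _ => stageCost_nonneg hQ hR _ _) (qn_nonneg hS _)

theorem Jstar_eq_MPCcost {x : Fin n → ℝ} {xb : ℕ → Fin n → ℝ} {ub : ℕ → Fin m → ℝ}
    {xs : Fin n → ℝ} {us : Fin m → ℝ} {ys : Fin p → ℝ}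
    (h : MPCopt f0 h0 B D U Us Q R S yr N x xb ub xs us ys) :
    Jstar f0 h0 B D U Us Q R S yr N x = MPCcost Q R S yr N xb ub xs us ys := by
  refine IsLeast.csInf_eq ⟨⟨xb, ub, xs, us, ys, h.1, rfl⟩, ?_⟩
  rintro _ ⟨xb', ub', xs', us', ys', h', rfl⟩
  exact h.2 _ _ _ _ _ h'

section Candidates

variable {x x' xs xs₀ : ι → Fin n → ℝ} {us : ι → Fin m → ℝ} {z : ι → ℕ → Fin n → ℝ}
  {v : ι → ℕ → Fin m → ℝ} {s t η : ι → ℝ}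

theorem eventually_mem_of_cthickening_subset (hε : 0 < ε) (hU : Metric.cthickening ε Us ⊆ U)
    {u : ι → Fin m → ℝ} (hus : ∀ i, us i ∈ Us) (hu : (fun i => u i - us i) =O[l] s)
    (hs : Tendsto s l (𝓝 0)) : ∀ᶠ i in l, u i ∈ U := by
  filter_upwards [Metric.tendsto_nhds.1 (hu.trans_tendsto hs) ε hε] with i hi
  rw [dist_zero_right, ← dist_eq_norm] at hi
  exact hU (Metric.mem_cthickening_of_dist_le _ _ _ _ (hus i) hi.le)

theorem exists_Jstar_le_nominal_add (hf : ContDiff ℝ 2 f0) (hμ : 0 < μ) (hA3 : A3holds f0 B μ)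
    (hN : n ≤ N) (hε : 0 < ε) (hU : Metric.cthickening ε Us ⊆ U) (hQ : Q.PosDef) (hR : R.PosDef)
    (hS : S.PosDef) (hx : x =O[l] fun _ => (1 : ℝ)) (hxs : ∀ i, (xs i, us i) ∈ Zlin f0 B Us (x i))
    (hz0 : (fun i => x i - z i 0) =O[l] η)
    (hz : ∀ k < N, (fun i => flin f0 B (x i) (z i k) (v i k) - z i (k + 1)) =O[l] η)
    (hzN : ∀ i, z i N = xs₀ i) (hxs₀ : (fun i => xs i - xs₀ i) =O[l] η)
    (hzs : ∀ k < N, (fun i => z i k - xs₀ i) =O[l] s)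
    (hvs : ∀ k < N, (fun i => v i k - us i) =O[l] s) (hηs : η =O[l] s)
    (hs : Tendsto s l (𝓝 0)) :
    (∀ᶠ i in l, MPCfeasible f0 h0 B D U Us N (x i)) ∧
      ∃ q : ι → ℝ, (q =O[l] fun i => s i * η i) ∧
        ∀ᶠ i in l, Jstar f0 h0 B D U Us Q R S yr N (x i) ≤
          ∑ k ∈ Finset.range N, stageCost Q R (z i k - xs₀ i) (v i k - us i) +
            qn S (hlin h0 D (x i) (xs i) (us i) - yr) + q i := by
  obtain ⟨u, hend, huv⟩ := exists_linRollout_eq hf hμ hA3 hN hx hz0 hz (by simpa only [hzN])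
  have states := isBigO_linRollout_sub hf hx hz0 hz huv
  have inputs_mem : ∀ᶠ i in l, ∀ k < N, u i k ∈ U := by
    simp only [← Finset.mem_range, Finset.eventually_all]
    refine fun k hk => eventually_mem_of_cthickening_subset hε hU (fun i => (hxs i).1) ?_ hs
    rw [Finset.mem_range] at hk
    exact (((huv k hk).trans hηs).add (hvs k hk)).congr_left fun i => sub_add_sub_cancel _ _ _
  have feas : ∀ᶠ i in l, MPCfeas f0 h0 B D U Us N (x i) (linRollout f0 B (x i) (u i)) (u i)
      (xs i) (us i) (hlin h0 D (x i) (xs i) (us i)) :=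
    inputs_mem.mono fun i hi => ⟨fun _ _ => rfl, rfl, hend i, hi, hxs i, rfl⟩
  refine ⟨feas.mono fun i hi => ⟨_, _, _, _, _, hi⟩,
    fun i => ∑ k ∈ Finset.range N,
      (stageCost Q R (linRollout f0 B (x i) (u i) k - xs i) (u i k - us i) -
        stageCost Q R (z i k - xs₀ i) (v i k - us i)), ?_, feas.mono fun i hi => ?_⟩
  · refine IsBigO.fun_sum fun k hk => ?_
    rw [Finset.mem_range] at hk
    refine isBigO_stageCost_sub (hzs k hk) (hvs k hk) ?_ ?_ hηs
    · exact ((states k hk.le).sub hxs₀).congr_left fun i => sub_sub_sub_comm _ _ _ _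
    · simpa only [sub_sub_sub_cancel_right] using huv k hk
  · refine (Jstar_le_MPCcost hQ hR hS hi).trans_eq ?_
    simp only [MPCcost, Finset.sum_sub_distrib, stageCost]
    ring

theorem exists_Jstar_le_of_mem_Zlin (hf : ContDiff ℝ 2 f0) (hμ : 0 < μ) (hA3 : A3holds f0 B μ)
    (hN : n ≤ N) (hε : 0 < ε) (hU : Metric.cthickening ε Us ⊆ U) (hQ : Q.PosDef) (hR : R.PosDef)
    (hS : S.PosDef) (hx : x =O[l] fun _ => (1 : ℝ)) (hxs : ∀ i, (xs i, us i) ∈ Zlin f0 B Us (x i))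
    (hxxs : (fun i => x i - xs i) =O[l] s) (hs : Tendsto s l (𝓝 0)) :
    ∃ q : ι → ℝ, (q =O[l] fun i => s i ^ 2) ∧
      ∀ᶠ i in l, Jstar f0 h0 B D U Us Q R S yr N (x i) ≤
        qn S (hlin h0 D (x i) (xs i) (us i) - yr) + q i := by
  have rest (i : ι) : flin f0 B (x i) (xs i) (us i) - xs i = 0 :=
    sub_eq_zero.2 (hxs i).2.symm
  obtain ⟨-, q, hq, hle⟩ := exists_Jstar_le_nominal_add (h0 := h0) (D := D) (yr := yr) (xs₀ := xs)
    (z := fun i _ => xs i) (v := fun i _ => us i) hf hμ hA3 hN hε hU hQ hR hS hx hxs hxxs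
    (by simp [rest, isBigO_zero]) (fun _ => rfl) (by simp [isBigO_zero]) (by simp [isBigO_zero])
    (by simp [isBigO_zero]) (isBigO_refl s l) hs
  refine ⟨q, by simpa only [sq] using hq, hle.mono fun i hi => ?_⟩
  simpa [stageCost_zero] using hi

theorem exists_Jstar_le_shifted (hf : ContDiff ℝ 2 f0) (hh : ContDiff ℝ 2 h0) (hμ : 0 < μ)
    (hA3 : A3holds f0 B μ) (hA4 : A4holds f0 σl) (hσl : 0 < σl) (hN : n ≤ N) (hε : 0 < ε)
    (hU : Metric.cthickening ε Us ⊆ U) (hQ : Q.PosDef) (hR : R.PosDef) (hS : S.PosDef)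
    {xb : ι → ℕ → Fin n → ℝ} {ub : ι → ℕ → Fin m → ℝ} {ys : ι → Fin p → ℝ}
    (hfeas : ∀ i, MPCfeas f0 h0 B D U Us N (x i) (xb i) (ub i) (xs i) (us i) (ys i))
    (hx : x =O[l] fun _ => (1 : ℝ)) (hx' : x' =O[l] fun _ => (1 : ℝ))
    (hxx' : (fun i => x' i - x i) =O[l] s) (hxs : (fun i => xs i - x' i) =O[l] s)
    (hxb : ∀ k < N, (fun i => xb i k - xs i) =O[l] s)
    (hub : ∀ k < N, (fun i => ub i k - us i) =O[l] s)
    (hx'n : (fun i => x' i - xb i n) =O[l] fun i => s i ^ 2)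
    (hy : (fun i => ys i - yr) =O[l] t) (hst : s =O[l] t) (hs : Tendsto s l (𝓝 0)) :
    (∀ᶠ i in l, MPCfeasible f0 h0 B D U Us N (x' i)) ∧
      ∃ q : ι → ℝ, (q =O[l] fun i => t i * s i ^ 2) ∧
        ∀ᶠ i in l, Jstar f0 h0 B D U Us Q R S yr N (x' i) ≤
          ∑ k ∈ Finset.range N, stageCost Q R (xb i k - xs i) (ub i k - us i) -
            ∑ k ∈ Finset.range n, stageCost Q R (xb i k - xs i) (ub i k - us i) +
            qn S (ys i - yr) + q i := by
  have hs1 : s =O[l] fun _ => (1 : ℝ) := hs.isBigO_one ℝ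
  have sq_le : (fun i => s i ^ 2) =O[l] s := by simpa [sq] using (isBigO_refl s l).mul hs1
  have steady (i : ι) : (xs i, us i) ∈ Zlin f0 B Us (x i) := (hfeas i).2.2.2.2.1
  have hzs := isBigO_extendConst_sub hxb
  have defect (k : ℕ) : (fun i => flin f0 B (x' i) (extendConst N (xb i) (xs i) k)
      (extendConst N (ub i) (us i) k) - extendConst N (xb i) (xs i) (k + 1)) =O[l]
        fun i => s i ^ 2 := by
    simp only [fun i => extendConst_succ_of_MPCfeas (hfeas i) k, sq]
    exact isBigO_hlin_sub_hlin_of_point hf B _ hx hx' hxx'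
      (((hzs k).add hxs).congr_left fun i => sub_add_sub_cancel _ _ _) (isBigO_refl s l)
  have hxs' : (fun i => linSteadyState f0 B (x' i) (us i) - xs i) =O[l] fun i => s i ^ 2 := by
    obtain rfl : xs = fun i => linSteadyState f0 B (x i) (us i) :=
      funext fun i => eq_linSteadyState_of_mem_Zlin hA4 hσl (steady i)
    simpa only [sq] using isBigO_linSteadyState_sub hf hA4 hσl hx hx' hxx' hxs (isBigO_refl s l)
  obtain ⟨feas, q, hq, hle⟩ := exists_Jstar_le_nominal_add (h0 := h0) (D := D) (yr := yr)
    (z := fun i k => extendConst N (xb i) (xs i) (n + k))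
    (v := fun i k => extendConst N (ub i) (us i) (n + k)) hf hμ hA3 hN hε hU hQ hR hS hx'
    (fun i => linSteadyState_mem_Zlin hA4 hσl (x' i) (steady i).1)
    (by simpa only [add_zero, fun i => extendConst_of_le (hfeas i).2.2.1 hN] using hx'n)
    (fun k _ => defect (n + k)) (fun i => extendConst_of_ge (Nat.le_add_left N n)) hxs'
    (fun k _ => hzs (n + k)) (fun k _ => isBigO_extendConst_sub hub (n + k)) sq_le hs
  have output_eq (i : ι) : ys i = hlin h0 D (x i) (xs i) (us i) := (hfeas i).2.2.2.2.2
  have output := isBigO_qn_linSteadyOutput_sub hf hh hA4 hσl S steady hx hx' hxx' hxs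
    (by simpa only [output_eq] using hy) (isBigO_refl s l) hs1 hst
  simp only [← sq, ← output_eq] at output
  refine ⟨feas, _, (hq.trans (hst.mul (isBigO_refl _ l))).add output, hle.mono fun i hi => ?_⟩
  rw [sum_stageCost_extendConst_add hN] at hi
  rw [linSteadyOutput]
  linarith

end Candidates

section SingleSolution

variable {x xs xsr : Fin n → ℝ} {us usr : Fin m → ℝ} {ys : Fin p → ℝ} {xb : ℕ → Fin n → ℝ}
  {ub : ℕ → Fin m → ℝ}

theorem Vfun_eq_of_MPCopt (hopt : MPCopt f0 h0 B D U Us Q R S yr N x xb ub xs us ys) :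
    Vfun f0 h0 B D U Us Q R S yr N x =
      ∑ k ∈ Finset.range N, stageCost Q R (xb k - xs) (ub k - us) +
        (qn S (ys - yr) - Jeqlin f0 h0 B D Us S yr x) := by
  rw [Vfun, Jstar_eq_MPCcost hopt]
  exact add_sub_assoc _ _ _

theorem Jeqlin_nonneg (hS : S.PosDef) (hsr : IsOptSteady f0 h0 B D Us S yr x xsr usr) :
    0 ≤ Jeqlin f0 h0 B D Us S yr x := by
  rw [Jeqlin_eq_of_isOptSteady hsr]
  exact qn_nonneg hS _

theorem sum_stageCost_le_Vfun (hsr : IsOptSteady f0 h0 B D Us S yr x xsr usr)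
    (hopt : MPCopt f0 h0 B D U Us Q R S yr N x xb ub xs us ys) :
    ∑ k ∈ Finset.range N, stageCost Q R (xb k - xs) (ub k - us) ≤
      Vfun f0 h0 B D U Us Q R S yr N x := by
  obtain ⟨-, -, -, -, steady, output_eq⟩ := hopt.1
  rw [Vfun_eq_of_MPCopt hopt, Jeqlin_eq_of_isOptSteady hsr, output_eq]
  exact le_add_of_nonneg_right (sub_nonneg.2 (hsr.2 (xs, us) steady))

theorem sum_range_stageCost_le_Vfun (hQ : Q.PosDef) (hR : R.PosDef) {K : ℕ} (hK : K ≤ N)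
    (hsr : IsOptSteady f0 h0 B D Us S yr x xsr usr)
    (hopt : MPCopt f0 h0 B D U Us Q R S yr N x xb ub xs us ys) :
    ∑ k ∈ Finset.range K, stageCost Q R (xb k - xs) (ub k - us) ≤
      Vfun f0 h0 B D U Us Q R S yr N x :=
  (Finset.sum_le_sum_of_subset_of_nonneg (Finset.range_mono hK)
    fun _ _ _ => stageCost_nonneg hQ hR _ _).trans (sum_stageCost_le_Vfun hsr hopt)

theorem Vfun_nonneg (hQ : Q.PosDef) (hR : R.PosDef)
    (hsr : IsOptSteady f0 h0 B D Us S yr x xsr usr)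
    (hopt : MPCopt f0 h0 B D U Us Q R S yr N x xb ub xs us ys) :
    0 ≤ Vfun f0 h0 B D U Us Q R S yr N x :=
  sum_range_stageCost_le_Vfun hQ hR N.zero_le hsr hopt

theorem qn_sub_le_Vfun_add_Jeqlin (hQ : Q.PosDef) (hR : R.PosDef)
    (hopt : MPCopt f0 h0 B D U Us Q R S yr N x xb ub xs us ys) :
    qn S (ys - yr) ≤ Vfun f0 h0 B D U Us Q R S yr N x + Jeqlin f0 h0 B D Us S yr x := by
  have cost_nonneg : 0 ≤ ∑ k ∈ Finset.range N, stageCost Q R (xb k - xs) (ub k - us) :=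
    Finset.sum_nonneg fun _ _ => stageCost_nonneg hQ hR _ _
  rw [Vfun_eq_of_MPCopt hopt]
  linarith

end SingleSolution

theorem isBigO_sqrt_sum_stageCost (hQ : Q.PosDef) (hR : R.PosDef) (e : ι → ℕ → Fin n → ℝ)
    (d : ι → ℕ → Fin m → ℝ) {k K : ℕ} (hk : k < K) :
    ((fun i => e i k) =O[l] fun i => √(∑ j ∈ Finset.range K, stageCost Q R (e i j) (d i j))) ∧
      (fun i => d i k) =O[l] fun i => √(∑ j ∈ Finset.range K, stageCost Q R (e i j) (d i j)) := by
  have cost_nonneg (i j) : 0 ≤ stageCost Q R (e i j) (d i j) := stageCost_nonneg hQ hR _ _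
  have cost_le (i : ι) : stageCost Q R (e i k) (d i k) ≤
      √(∑ j ∈ Finset.range K, stageCost Q R (e i j) (d i j)) ^ 2 := by
    rw [Real.sq_sqrt (Finset.sum_nonneg fun _ _ => cost_nonneg i _)]
    exact Finset.single_le_sum (f := fun j => stageCost Q R (e i j) (d i j))
      (fun _ _ => cost_nonneg i _) (Finset.mem_range.2 hk)
  exact ⟨(isBigO_qn_sq_iff hQ).1 (isBigO_of_nonneg_of_le (fun _ => qn_nonneg hQ _) fun i =>
      (le_add_of_nonneg_right (qn_nonneg hR _)).trans (cost_le i)),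
    (isBigO_qn_sq_iff hR).1 (isBigO_of_nonneg_of_le (fun _ => qn_nonneg hR _) fun i =>
      (le_add_of_nonneg_left (qn_nonneg hQ _)).trans (cost_le i))⟩

theorem isBigO_one_of_mem_Zlin {𝓑 : Set ((Fin n → ℝ) × (Fin m → ℝ))} (h𝓑 : Bornology.IsBounded 𝓑)
    (hA5 : ∀ x, Zlin f0 B Us x ⊆ 𝓑) {x xs : ι → Fin n → ℝ} {us : ι → Fin m → ℝ}
    (hxs : ∀ i, (xs i, us i) ∈ Zlin f0 B Us (x i)) : xs =O[l] fun _ => (1 : ℝ) := by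
  obtain ⟨r, hr⟩ := h𝓑.exists_norm_le
  exact IsBigO.of_bound r (Eventually.of_forall fun i => by
    simpa using (norm_fst_le (xs i, us i)).trans (hr _ (hA5 _ (hxs i))))

section ClosedLoop

variable {x xs xsr xsr' : ι → Fin n → ℝ} {us usr usr' : ι → Fin m → ℝ} {ys : ι → Fin p → ℝ}
  {xb : ι → ℕ → Fin n → ℝ} {ub : ι → ℕ → Fin m → ℝ} {γ : ℝ}

theorem isBigO_sub_sqrt_Vfun (hQ : Q.PosDef) (hR : R.PosDef)
    (hsr : ∀ i, IsOptSteady f0 h0 B D Us S yr (x i) (xsr i) (usr i))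
    (hopt : ∀ i, MPCopt f0 h0 B D U Us Q R S yr N (x i) (xb i) (ub i) (xs i) (us i) (ys i)) :
    (∀ k ≤ N, (fun i => xb i k - xs i) =O[l] fun i => √(Vfun f0 h0 B D U Us Q R S yr N (x i))) ∧
      ∀ k < N, (fun i => ub i k - us i) =O[l] fun i => √(Vfun f0 h0 B D U Us Q R S yr N (x i)) := by
  have cost_le_Vfun : (fun i => √(∑ k ∈ Finset.range N,
      stageCost Q R (xb i k - xs i) (ub i k - us i))) =O[l]
        fun i => √(Vfun f0 h0 B D U Us Q R S yr N (x i)) :=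
    isBigO_sqrt_of_le fun i => sum_stageCost_le_Vfun (hsr i) (hopt i)
  have near {k : ℕ} (hk : k < N) := isBigO_sqrt_sum_stageCost (l := l) hQ hR
    (fun i k => xb i k - xs i) (fun i k => ub i k - us i) hk
  refine ⟨fun k hk => ?_, fun k hk => (near hk).2.trans cost_le_Vfun⟩
  rcases hk.lt_or_eq with hk | rfl
  · exact (near hk).1.trans cost_le_Vfun
  · simp only [fun i => (hopt i).1.2.2.1, sub_self]
    exact isBigO_zero _ l

theorem isBigO_output_sub_setpoint (hQ : Q.PosDef) (hR : R.PosDef) (hS : S.PosDef)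
    (hsr : ∀ i, IsOptSteady f0 h0 B D Us S yr (x i) (xsr i) (usr i))
    (hopt : ∀ i, MPCopt f0 h0 B D U Us Q R S yr N (x i) (xb i) (ub i) (xs i) (us i) (ys i)) :
    (fun i => ys i - yr) =O[l] fun i => √(Vfun f0 h0 B D U Us Q R S yr N (x i)) +
      √(Jeqlin f0 h0 B D Us S yr (x i)) := by
  refine (isBigO_qn_sq_iff hS).1 (isBigO_of_nonneg_of_le (fun _ => qn_nonneg hS _) fun i => ?_)
  refine (qn_sub_le_Vfun_add_Jeqlin hQ hR (hopt i)).trans ?_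
  rw [add_sq, Real.sq_sqrt (Vfun_nonneg hQ hR (hsr i) (hopt i)),
    Real.sq_sqrt (Jeqlin_nonneg hS (hsr i))]
  nlinarith [mul_nonneg (Real.sqrt_nonneg (Vfun f0 h0 B D U Us Q R S yr N (x i)))
    (Real.sqrt_nonneg (Jeqlin f0 h0 B D Us S yr (x i)))]

theorem isBigO_rollout_sub_of_MPCfeas (hf : ContDiff ℝ 2 f0) {s : ι → ℝ} (hN : n ≤ N)
    (hfeas : ∀ i, MPCfeas f0 h0 B D U Us N (x i) (xb i) (ub i) (xs i) (us i) (ys i))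
    (hx : x =O[l] fun _ => (1 : ℝ)) (hs : s =O[l] fun _ => (1 : ℝ))
    (hxb : ∀ k ≤ N, (fun i => xb i k - x i) =O[l] s) :
    (fun i => rollout f0 B (x i) (ub i) n - xb i n) =O[l] fun i => s i ^ 2 := by
  have prediction {k : ℕ} (hk : k ≤ N) (i : ι) : linRollout f0 B (x i) (ub i) k = xb i k :=
    (eq_linRollout_of_MPCfeas (hfeas i) k hk).symm
  simpa only [prediction hN] using isBigO_rollout_sub_linRollout (B := B) hf hx hs
    (u := ub) (fun k hk => by simpa only [prediction hk] using hxb k hk) n hN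

theorem isBigO_sub_optSteady (hQ : Q.PosDef) (hR : R.PosDef) (hγ : 0 < γ)
    (hlower : ∀ i, γ * en (xs i - xsr i) ^ 2 ≤
      ∑ k ∈ Finset.range n, (en (xb i k - xs i) ^ 2 + en (ub i k - us i) ^ 2)) :
    (fun i => xs i - xsr i) =O[l]
      fun i => √(∑ k ∈ Finset.range n, stageCost Q R (xb i k - xs i) (ub i k - us i)) := by
  have deviations : (fun i => ∑ k ∈ Finset.range n,
      (en (xb i k - xs i) ^ 2 + en (ub i k - us i) ^ 2)) =O[l] fun i =>
        √(∑ k ∈ Finset.range n, stageCost Q R (xb i k - xs i) (ub i k - us i)) ^ 2 := by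
    refine IsBigO.fun_sum fun k hk => ?_
    have near := isBigO_sqrt_sum_stageCost (l := l) hQ hR (fun i k => xb i k - xs i)
      (fun i k => ub i k - us i) (Finset.mem_range.1 hk)
    exact (((isTheta_en _).1.trans near.1).pow 2).add (((isTheta_en _).1.trans near.2).pow 2)
  refine (isTheta_en _).2.trans (IsBigO.of_pow two_ne_zero
    (((isBigO_const_mul_left_iff hγ.ne').1 ?_).trans deviations))
  exact isBigO_of_nonneg_of_le (fun i => mul_nonneg hγ.le (sq_nonneg _)) hlower

theorem isBigO_point_sub_optSteady (hQ : Q.PosDef) (hR : R.PosDef) (hγ : 0 < γ)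
    (hxb : ∀ i, xb i 0 = x i)
    (hlower : ∀ i, γ * en (xs i - xsr i) ^ 2 ≤
      ∑ k ∈ Finset.range n, (en (xb i k - xs i) ^ 2 + en (ub i k - us i) ^ 2)) :
    (fun i => x i - xsr i) =O[l]
      fun i => √(∑ k ∈ Finset.range n, stageCost Q R (xb i k - xs i) (ub i k - us i)) := by
  refine IsBigO.congr_left (IsBigO.add ?_ (isBigO_sub_optSteady hQ hR hγ hlower))
    fun i => sub_add_sub_cancel _ _ _
  rcases n.eq_zero_or_pos with rfl | hn
  · exact (isBigO_zero _ l).congr_left fun i => Subsingleton.elim _ _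
  · simpa only [hxb] using (isBigO_sqrt_sum_stageCost hQ hR (fun i k => xb i k - xs i)
      (fun i k => ub i k - us i) hn).1

theorem isBigO_optOutput_sub_setpoint (hS : S.PosDef)
    (hsr : ∀ i, IsOptSteady f0 h0 B D Us S yr (x i) (xsr i) (usr i)) :
    (fun i => hlin h0 D (x i) (xsr i) (usr i) - yr) =O[l]
      fun i => √(Jeqlin f0 h0 B D Us S yr (x i)) := by
  refine (isBigO_qn_sq_iff hS).1 (isBigO_of_nonneg_of_le (fun _ => qn_nonneg hS _) fun i => ?_)
  rw [Real.sq_sqrt (Jeqlin_nonneg hS (hsr i)), Jeqlin_eq_of_isOptSteady (hsr i)]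

theorem isBigO_one_of_MPCopt {𝓑 : Set ((Fin n → ℝ) × (Fin m → ℝ))} (h𝓑 : Bornology.IsBounded 𝓑)
    (hA5 : ∀ x, Zlin f0 B Us x ⊆ 𝓑) (hQ : Q.PosDef) (hR : R.PosDef)
    (hsr : ∀ i, IsOptSteady f0 h0 B D Us S yr (x i) (xsr i) (usr i))
    (hopt : ∀ i, MPCopt f0 h0 B D U Us Q R S yr N (x i) (xb i) (ub i) (xs i) (us i) (ys i))
    (hV : (fun i => √(Vfun f0 h0 B D U Us Q R S yr N (x i))) =O[l] fun _ => (1 : ℝ)) :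
    x =O[l] fun _ => (1 : ℝ) := by
  have start_sub := ((isBigO_sub_sqrt_Vfun hQ hR hsr hopt).1 0 N.zero_le).trans hV
  simpa only [sub_add_cancel, (hopt _).1.2.1] using
    start_sub.add (isBigO_one_of_mem_Zlin h𝓑 hA5 fun i => (hopt i).1.2.2.2.2.1)

theorem isBigO_Vfun_sum_stageCost (hf : ContDiff ℝ 2 f0) (hμ : 0 < μ) (hA3 : A3holds f0 B μ)
    (hN : n ≤ N) (hε : 0 < ε) (hU : Metric.cthickening ε Us ⊆ U) (hQ : Q.PosDef) (hR : R.PosDef)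
    (hS : S.PosDef) (hsr : ∀ i, IsOptSteady f0 h0 B D Us S yr (x i) (xsr i) (usr i))
    (hopt : ∀ i, MPCopt f0 h0 B D U Us Q R S yr N (x i) (xb i) (ub i) (xs i) (us i) (ys i))
    (hx : x =O[l] fun _ => (1 : ℝ))
    (hxsr : (fun i => x i - xsr i) =O[l]
      fun i => √(∑ k ∈ Finset.range n, stageCost Q R (xb i k - xs i) (ub i k - us i)))
    (hV : Tendsto (fun i => Vfun f0 h0 B D U Us Q R S yr N (x i)) l (𝓝 0)) :
    (fun i => Vfun f0 h0 B D U Us Q R S yr N (x i)) =O[l]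
      fun i => ∑ k ∈ Finset.range n, stageCost Q R (xb i k - xs i) (ub i k - us i) := by
  have cost_nonneg (i : ι) :
      0 ≤ ∑ k ∈ Finset.range n, stageCost Q R (xb i k - xs i) (ub i k - us i) :=
    Finset.sum_nonneg fun _ _ => stageCost_nonneg hQ hR _ _
  have sqrt_cost := (squeeze_zero cost_nonneg
    (fun i => sum_range_stageCost_le_Vfun hQ hR hN (hsr i) (hopt i)) hV).sqrt
  rw [Real.sqrt_zero] at sqrt_cost
  obtain ⟨q, hq, hle⟩ := exists_Jstar_le_of_mem_Zlin (h0 := h0) (D := D) (yr := yr) hf hμ hA3 hN hε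
    hU hQ hR hS hx (fun i => (hsr i).1) hxsr sqrt_cost
  simp only [Real.sq_sqrt (cost_nonneg _)] at hq
  refine IsBigO.trans (IsBigO.of_bound 1 (hle.mono fun i hi => ?_)) hq
  rw [Real.norm_of_nonneg (Vfun_nonneg hQ hR (hsr i) (hopt i)), one_mul]
  refine le_trans ?_ (le_abs_self _)
  rw [Vfun, Jeqlin_eq_of_isOptSteady (hsr i)]
  linarith

theorem exists_Vfun_rollout_le (hf : ContDiff ℝ 2 f0) (hh : ContDiff ℝ 2 h0)
    (hA2 : A2holds f0 h0 B D σs) (hσs : 0 < σs) (hμ : 0 < μ) (hA3 : A3holds f0 B μ)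
    (hA4 : A4holds f0 σl) (hσl : 0 < σl) (hUs : Convex ℝ Us) (hN : n ≤ N) (hε : 0 < ε)
    (hU : Metric.cthickening ε Us ⊆ U) (hQ : Q.PosDef) (hR : R.PosDef) (hS : S.PosDef)
    (hsr : ∀ i, IsOptSteady f0 h0 B D Us S yr (x i) (xsr i) (usr i))
    (hsr' : ∀ i, IsOptSteady f0 h0 B D Us S yr (rollout f0 B (x i) (ub i) n) (xsr' i) (usr' i))
    (hopt : ∀ i, MPCopt f0 h0 B D U Us Q R S yr N (x i) (xb i) (ub i) (xs i) (us i) (ys i))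
    (hx : x =O[l] fun _ => (1 : ℝ)) (hxsr' : xsr' =O[l] fun _ => (1 : ℝ)) {s t : ι → ℝ}
    (hxb : ∀ k ≤ N, (fun i => xb i k - xs i) =O[l] s)
    (hub : ∀ k < N, (fun i => ub i k - us i) =O[l] s)
    (hxsr : (fun i => x i - xsr i) =O[l] s)
    (hys : (fun i => ys i - yr) =O[l] t)
    (hysr : (fun i => hlin h0 D (x i) (xsr i) (usr i) - yr) =O[l] t)
    (hst : s =O[l] t) (ht : t =O[l] fun _ => (1 : ℝ)) (hs : Tendsto s l (𝓝 0)) :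
    (∀ᶠ i in l, MPCfeasible f0 h0 B D U Us N (rollout f0 B (x i) (ub i) n)) ∧
      ∃ q : ι → ℝ, (q =O[l] fun i => t i * s i ^ 2) ∧ ∀ᶠ i in l,
        Vfun f0 h0 B D U Us Q R S yr N (rollout f0 B (x i) (ub i) n) ≤
          Vfun f0 h0 B D U Us Q R S yr N (x i) -
            ∑ k ∈ Finset.range n, stageCost Q R (xb i k - xs i) (ub i k - us i) + q i := by
  have hs1 : s =O[l] fun _ => (1 : ℝ) := hst.trans ht
  have sq_le : (fun i => s i ^ 2) =O[l] s := by simpa [sq] using (isBigO_refl s l).mul hs1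
  have hxsx : (fun i => x i - xs i) =O[l] s := by
    simpa only [(hopt _).1.2.1] using hxb 0 N.zero_le
  have landing := isBigO_rollout_sub_of_MPCfeas hf hN (fun i => (hopt i).1) hx hs1
    fun k hk => ((hxb k hk).sub hxsx).congr_left fun i => sub_sub_sub_cancel_right _ _ _
  have hx'xs : (fun i => rollout f0 B (x i) (ub i) n - xs i) =O[l] s :=
    ((landing.trans sq_le).add (hxb n hN)).congr_left fun i => sub_add_sub_cancel _ _ _
  have hxx' : (fun i => rollout f0 B (x i) (ub i) n - x i) =O[l] s :=
    (hx'xs.sub hxsx).congr_left fun i => sub_sub_sub_cancel_right _ _ _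
  have hx' : (fun i => rollout f0 B (x i) (ub i) n) =O[l] fun _ => (1 : ℝ) :=
    ((hxx'.trans hs1).add hx).congr_left fun i => sub_add_cancel _ _
  have hxsrx' : (fun i => xsr i - rollout f0 B (x i) (ub i) n) =O[l] s :=
    ((hxx'.add hxsr).congr_left fun i => sub_add_sub_cancel _ _ _).symm
  obtain ⟨feas, q, hq, hle⟩ := exists_Jstar_le_shifted hf hh hμ hA3 hA4 hσl hN hε hU hQ hR hS
    (fun i => (hopt i).1) hx hx' hxx' hx'xs.symm (fun k hk => hxb k hk.le) hub landing hys hst hs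
  obtain ⟨r, hr, Jeqlin_le⟩ := exists_isBigO_Jeqlin_le_add hf hh hA2 hσs hA4 hσl hUs hS hsr hsr' hx
    hx' hxsr' hxx' hxsrx' hysr hst ht
  refine ⟨feas, _, hq.add hr, hle.mono fun i hi => ?_⟩
  have hJ := Jeqlin_le i
  rw [Vfun_eq_of_MPCopt (hopt i), Vfun]
  linarith

end ClosedLoop

theorem exists_contraction_of_le_sub_add {V V' H q : ι → ℝ} (hV : ∀ i, 0 ≤ V i)
    (hVH : V =O[l] H) (hH : ∀ i, 0 ≤ H i) (hq : q =o[l] V)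
    (hV' : ∀ᶠ i in l, V' i ≤ V i - H i + q i) :
    ∃ c, 0 < c ∧ c < 1 ∧ ∀ᶠ i in l, V' i ≤ c * V i := by
  obtain ⟨W, hW, hbound⟩ := hVH.exists_pos
  have hw : 0 < (2 * (W + 1))⁻¹ := by positivity
  have hw' : (2 * (W + 1))⁻¹ < 1 := inv_lt_one_of_one_lt₀ (by linarith)
  refine ⟨1 - (2 * (W + 1))⁻¹, sub_pos.2 hw', sub_lt_self _ hw, ?_⟩
  filter_upwards [hbound.bound, hq.bound hw, hV'] with i hi hqi hle
  rw [Real.norm_of_nonneg (hV i), Real.norm_of_nonneg (hH i)] at hi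
  rw [Real.norm_of_nonneg (hV i)] at hqi
  have hHi : 2 * (2 * (W + 1))⁻¹ * V i ≤ H i := by
    rw [mul_inv, mul_inv_cancel_left₀ two_ne_zero, inv_mul_le_iff₀ (by positivity)]
    linarith [hH i]
  linarith [le_abs_self (q i), Real.norm_eq_abs (q i)]

/-- An optimal solution of the tracking MPC problem, together with its initial state `x`, whose
first `n` deviations from the artificial steady state dominate the distance `‖xˢ - xˢʳ_lin(x)‖`
with constant `γ`. -/
structure DominatingSolution (f0 : (Fin n → ℝ) → Fin n → ℝ) (h0 : (Fin n → ℝ) → Fin p → ℝ)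
    (B : Matrix (Fin n) (Fin m) ℝ) (D : Matrix (Fin p) (Fin m) ℝ) (U Us : Set (Fin m → ℝ))
    (Q : Matrix (Fin n) (Fin n) ℝ) (R : Matrix (Fin m) (Fin m) ℝ) (S : Matrix (Fin p) (Fin p) ℝ)
    (yr : Fin p → ℝ) (N : ℕ) (xsr : (Fin n → ℝ) → Fin n → ℝ) (γ : ℝ) where
  (x : Fin n → ℝ) (xb : ℕ → Fin n → ℝ) (ub : ℕ → Fin m → ℝ)
  (xs : Fin n → ℝ) (us : Fin m → ℝ) (ys : Fin p → ℝ)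
  isOpt : MPCopt f0 h0 B D U Us Q R S yr N x xb ub xs us ys
  dominates : γ * en (xs - xsr x) ^ 2 ≤
    ∑ k ∈ Finset.range n, (en (xb k - xs) ^ 2 + en (ub k - us) ^ 2)

variable {xsr : (Fin n → ℝ) → Fin n → ℝ} {usr : (Fin n → ℝ) → Fin m → ℝ} {γ : ℝ}
  {𝓑 : Set ((Fin n → ℝ) × (Fin m → ℝ))}

theorem exists_eventually_Vfun_rollout_le_mul (hf : ContDiff ℝ 2 f0) (hh : ContDiff ℝ 2 h0)
    (hA2 : A2holds f0 h0 B D σs) (hσs : 0 < σs) (hμ : 0 < μ) (hA3 : A3holds f0 B μ)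
    (hA4 : A4holds f0 σl) (hσl : 0 < σl) (h𝓑 : Bornology.IsBounded 𝓑)
    (hA5 : ∀ x, Zlin f0 B Us x ⊆ 𝓑) (hUs : Convex ℝ Us) (hN : n ≤ N) (hε : 0 < ε)
    (hU : Metric.cthickening ε Us ⊆ U) (hQ : Q.PosDef) (hR : R.PosDef) (hS : S.PosDef)
    (hsr : ∀ x, IsOptSteady f0 h0 B D Us S yr x (xsr x) (usr x)) (hγ : 0 < γ)
    (d : ι → DominatingSolution f0 h0 B D U Us Q R S yr N xsr γ)
    (hV : Tendsto (fun i => Vfun f0 h0 B D U Us Q R S yr N (d i).x) l (𝓝 0))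
    (hJ : Tendsto (fun i => Jeqlin f0 h0 B D Us S yr (d i).x) l (𝓝 0)) :
    ∃ c, 0 < c ∧ c < 1 ∧ ∀ᶠ i in l,
      MPCfeasible f0 h0 B D U Us N (rollout f0 B (d i).x (d i).ub n) ∧
        Vfun f0 h0 B D U Us Q R S yr N (rollout f0 B (d i).x (d i).ub n) ≤
          c * Vfun f0 h0 B D U Us Q R S yr N (d i).x := by
  set V := fun i => Vfun f0 h0 B D U Us Q R S yr N (d i).x
  set J := fun i => Jeqlin f0 h0 B D Us S yr (d i).x
  have hopt (i : ι) := (d i).isOpt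
  have hsr_d (i : ι) := hsr (d i).x
  have V_nonneg (i : ι) : 0 ≤ V i := Vfun_nonneg hQ hR (hsr_d i) (hopt i)
  have sqrt_V : Tendsto (fun i => √(V i)) l (𝓝 0) := by simpa using hV.sqrt
  have sqrt_V_add : Tendsto (fun i => √(V i) + √(J i)) l (𝓝 0) := by
    simpa using sqrt_V.add hJ.sqrt
  have V_le : (fun i => √(V i)) =O[l] fun i => √(V i) + √(J i) :=
    isBigO_of_nonneg_of_le (fun _ => Real.sqrt_nonneg _)
      fun _ => le_add_of_nonneg_right (Real.sqrt_nonneg _)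
  have J_le : (fun i => √(J i)) =O[l] fun i => √(V i) + √(J i) :=
    isBigO_of_nonneg_of_le (fun _ => Real.sqrt_nonneg _)
      fun _ => le_add_of_nonneg_left (Real.sqrt_nonneg _)
  obtain ⟨hxb, hub⟩ := isBigO_sub_sqrt_Vfun (l := l) hQ hR hsr_d hopt
  have hx := isBigO_one_of_MPCopt h𝓑 hA5 hQ hR hsr_d hopt (sqrt_V.isBigO_one ℝ)
  have hxsr := isBigO_point_sub_optSteady (l := l) hQ hR hγ (fun i => (hopt i).1.2.1)
    fun i => (d i).dominates
  have hxsr_V := hxsr.trans (isBigO_sqrt_of_le fun i =>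
    sum_range_stageCost_le_Vfun hQ hR hN (hsr_d i) (hopt i))
  obtain ⟨feas, q, hq, hle⟩ := exists_Vfun_rollout_le hf hh hA2 hσs hμ hA3 hA4 hσl hUs hN hε hU hQ
    hR hS hsr_d (fun i => hsr _) hopt hx (isBigO_one_of_mem_Zlin h𝓑 hA5 fun i => (hsr _).1) hxb hub
    hxsr_V (isBigO_output_sub_setpoint hQ hR hS hsr_d hopt)
    ((isBigO_optOutput_sub_setpoint hS hsr_d).trans J_le) V_le (sqrt_V_add.isBigO_one ℝ) sqrt_V
  have hqV : q =o[l] V := by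
    refine (hq.congr_right fun i => congrArg _ (Real.sq_sqrt (V_nonneg i))).trans_isLittleO ?_
    simpa only [one_mul] using
      ((isLittleO_one_iff ℝ).2 sqrt_V_add).mul_isBigO (isBigO_refl V l)
  obtain ⟨c, hc, hc', hcV⟩ := exists_contraction_of_le_sub_add V_nonneg
    (isBigO_Vfun_sum_stageCost hf hμ hA3 hN hε hU hQ hR hS hsr_d hopt hx hxsr hV)
    (fun i => Finset.sum_nonneg fun _ _ => stageCost_nonneg hQ hR _ _) hqV hle
  exact ⟨c, hc, hc', feas.and hcV⟩

end TrackingMPC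

end

theorem stmt2_general {n m p : ℕ} (N : ℕ) (hN : n ≤ N)
    (f0 : (Fin n → ℝ) → Fin n → ℝ) (h0 : (Fin n → ℝ) → Fin p → ℝ)
    (B : Matrix (Fin n) (Fin m) ℝ) (D : Matrix (Fin p) (Fin m) ℝ) (U Us : Set (Fin m → ℝ))
    (yr : Fin p → ℝ) (Q : Matrix (Fin n) (Fin n) ℝ) (R : Matrix (Fin m) (Fin m) ℝ)
    (S : Matrix (Fin p) (Fin p) ℝ) (hUs : Convex ℝ Us) {ε : ℝ} (hε : 0 < ε)
    (hU : Metric.cthickening ε Us ⊆ U) (hQ : Q.PosDef) (hR : R.PosDef) (hS : S.PosDef)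
    (hf : ContDiff ℝ 2 f0) (hh : ContDiff ℝ 2 h0)
    (σs : ℝ) (hσs : 0 < σs) (hA2 : A2holds f0 h0 B D σs)
    (μ : ℝ) (hμ : 0 < μ) (hA3 : A3holds f0 B μ)
    (σl : ℝ) (hσl : 0 < σl) (hA4 : A4holds f0 σl)
    (𝓑 : Set ((Fin n → ℝ) × (Fin m → ℝ))) (h𝓑 : Bornology.IsBounded 𝓑)
    (hA5 : ∀ x, Zlin f0 B Us x ⊆ 𝓑)
    (xsr : (Fin n → ℝ) → Fin n → ℝ) (usr : (Fin n → ℝ) → Fin m → ℝ)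
    (hsr : ∀ x, IsOptSteady f0 h0 B D Us S yr x (xsr x) (usr x)) (γ : ℝ) (hγ : 0 < γ) :
    ∃ δ c : ℝ, 0 < δ ∧ 0 < c ∧ c < 1 ∧ ∀ x,
      Vfun f0 h0 B D U Us Q R S yr N x ≤ δ → Jeqlin f0 h0 B D Us S yr x ≤ δ →
      ∀ xb ub xs us ys, MPCopt f0 h0 B D U Us Q R S yr N x xb ub xs us ys →
        γ * en (xs - xsr x) ^ 2 ≤
          ∑ k ∈ Finset.range n, (en (xb k - xs) ^ 2 + en (ub k - us) ^ 2) →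
        MPCfeasible f0 h0 B D U Us N (rollout f0 B x ub n) ∧
          Vfun f0 h0 B D U Us Q R S yr N (rollout f0 B x ub n) ≤
            c * Vfun f0 h0 B D U Us Q R S yr N x := by
  let VJ (d : DominatingSolution f0 h0 B D U Us Q R S yr N xsr γ) : ℝ × ℝ :=
    (Vfun f0 h0 B D U Us Q R S yr N d.x, Jeqlin f0 h0 B D Us S yr d.x)
  have hVJ : Filter.Tendsto VJ ((nhds 0).comap VJ) (nhds 0) := Filter.tendsto_comap
  obtain ⟨c, hc, hc', hcV⟩ := exists_eventually_Vfun_rollout_le_mul hf hh hA2 hσs hμ hA3 hA4 hσl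
    h𝓑 hA5 hUs hN hε hU hQ hR hS hsr hγ id hVJ.fst_nhds hVJ.snd_nhds
  obtain ⟨δ, hδ, hball⟩ := (Metric.nhds_basis_closedBall.comap VJ).eventually_iff.1 hcV
  refine ⟨δ, c, hδ, hc, hc', fun x hV hJ xb ub xs us ys hopt hdom =>
    hball (x := ⟨x, xb, ub, xs, us, ys, hopt, hdom⟩) (mem_closedBall_zero_iff.2 (max_le ?_ ?_))⟩
  · rwa [Real.norm_of_nonneg (Vfun_nonneg hQ hR (hsr x) hopt)]
  · rwa [Real.norm_of_nonneg (Jeqlin_nonneg hS (hsr x))]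

/-- Proposition 3 (candidate 1): for every `γ₁ > 0` there exist
`V_max, J_eq^max > 0` and `c_{V,1} ∈ (0,1)` such that, whenever the tracking MPC
problem is feasible at `x_t` with `V(x_t) ≤ V_max`, `J*_{eq,lin}(x_t) ≤ J_eq^max`,
the optimal solution satisfies
`Σ_{k<n}(‖x̄*_k − xˢ*‖₂² + ‖ū*_k − uˢ*‖₂²) ≥ γ₁‖xˢ* − xˢʳ_lin(x_t)‖₂²`, and
`J*_{eq,lin}(x_{t+n}) ≤ J_eq^max` for the `n`-step nonlinear successor state
`x_{t+n}`, the problem is feasible at `x_{t+n}` and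
`V(x_{t+n}) ≤ c_{V,1} V(x_t)`. -/
theorem stmt2 {n m p : ℕ} (N : ℕ) (hN : n ≤ N)
    (f0 : (Fin n → ℝ) → Fin n → ℝ) (h0 : (Fin n → ℝ) → Fin p → ℝ)
    (B : Matrix (Fin n) (Fin m) ℝ) (D : Matrix (Fin p) (Fin m) ℝ)
    (U Us : Set (Fin m → ℝ)) (yr : Fin p → ℝ)
    (Q : Matrix (Fin n) (Fin n) ℝ) (R : Matrix (Fin m) (Fin m) ℝ)
    (S : Matrix (Fin p) (Fin p) ℝ)
    (hU : IsCompact U) (hUs : IsCompact Us) (hUsconv : Convex ℝ Us)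
    (hUsint : Us ⊆ interior U)
    (hQ : Q.PosDef) (hR : R.PosDef) (hS : S.PosDef)
    -- (A1)
    (hf0 : ContDiff ℝ 2 f0) (hh0 : ContDiff ℝ 2 h0)
    -- (A2)
    (σs : ℝ) (hσs : 0 < σs) (hA2 : A2holds f0 h0 B D σs)
    -- (A3)
    (μ : ℝ) (hμ : 0 < μ) (hA3 : A3holds f0 B μ)
    -- (A4)
    (σl : ℝ) (hσl : 0 < σl) (hA4 : A4holds f0 σl)
    -- (A5)
    (𝓑 : Set ((Fin n → ℝ) × (Fin m → ℝ))) (h𝓑 : IsCompact 𝓑)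
    (hA5 : ∀ xt : Fin n → ℝ, Zlin f0 B Us xt ⊆ 𝓑)
    -- optimal reachable steady state of the linearization at each point
    (xsrlin : (Fin n → ℝ) → Fin n → ℝ) (usrlin : (Fin n → ℝ) → Fin m → ℝ)
    (hxsrlin : ∀ xt : Fin n → ℝ, (xsrlin xt, usrlin xt) ∈ Zlin f0 B Us xt ∧
      ∀ z ∈ Zlin f0 B Us xt,
        qn S (hlin h0 D xt (xsrlin xt) (usrlin xt) - yr) ≤
          qn S (hlin h0 D xt z.1 z.2 - yr)) :
    ∀ γ1 : ℝ, 0 < γ1 →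
      ∃ Vmax Jeqmax cV1 : ℝ, 0 < Vmax ∧ 0 < Jeqmax ∧ 0 < cV1 ∧ cV1 < 1 ∧
        ∀ xt : Fin n → ℝ,
          MPCfeasible f0 h0 B D U Us N xt →
          Vfun f0 h0 B D U Us Q R S yr N xt ≤ Vmax →
          Jeqlin f0 h0 B D Us S yr xt ≤ Jeqmax →
          ∀ (xb : ℕ → Fin n → ℝ) (ub : ℕ → Fin m → ℝ) (xs : Fin n → ℝ)
            (us : Fin m → ℝ) (ys : Fin p → ℝ),
            MPCopt f0 h0 B D U Us Q R S yr N xt xb ub xs us ys →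
            γ1 * en (xs - xsrlin xt) ^ 2 ≤
              ∑ k ∈ Finset.range n, (en (xb k - xs) ^ 2 + en (ub k - us) ^ 2) →
            Jeqlin f0 h0 B D Us S yr (rollout f0 B xt ub n) ≤ Jeqmax →
            MPCfeasible f0 h0 B D U Us N (rollout f0 B xt ub n) ∧
            Vfun f0 h0 B D U Us Q R S yr N (rollout f0 B xt ub n) ≤
              cV1 * Vfun f0 h0 B D U Us Q R S yr N xt := by
  intro γ1 hγ1
  obtain ⟨ε, hε, hεU⟩ := hUs.exists_cthickening_subset_open isOpen_interior hUsint
  obtain ⟨δ, c, hδ, hc, hc', hδc⟩ := stmt2_general N hN f0 h0 B D U Us yr Q R S hUsconv hε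
    (hεU.trans interior_subset) hQ hR hS hf0 hh0 σs hσs hA2 μ hμ hA3 σl hσl hA4 𝓑 h𝓑.isBounded hA5
    xsrlin usrlin hxsrlin γ1 hγ1
  exact ⟨δ, δ, c, hδ, hδ, hc, hc', fun x _ hV hJ xb ub xs us ys hopt hdom _ =>
    hδc x hV hJ xb ub xs us ys hopt hdom⟩
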